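/- arXiv:1010.5673 — 4 statements merged into one kernel-verified Lean document; each statement's English description precedes it below -/
import Mathlib

section
/- For all n ≥ 1 and 0 ≤ k ≤ n-1, the number of Dyck paths of semilength n with exactly k up steps at even height equals the Narayana number N(n,k) = (1/n) * C(n,k) * C(n,k+1). -/
/-- A Dyck path of semilength `n`, encoded as a list of booleans where
`true` is an up step `(1,1)` and `false` is a down step `(1,-1)`;
the path never goes below the x-axis. -/
def IsDyckPath (n : ℕ) (p : List Bool) : Prop :=
  p.length = 2 * n ∧ p.count true = n ∧
  ∀ i, (p.take i).count false ≤ (p.take i).count true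

/-- The height of the `i`-th step: the y-coordinate reached after step `i`.
For an up step this is the height `h` such that the step rises from `y = h-1` to `y = h`. -/
def stepHeight (p : List Bool) (i : ℕ) : ℕ :=
  (p.take (i + 1)).count true - (p.take (i + 1)).count false

/-- The number of up steps of `p` at height `h` with `h ≡ c (mod m)`. -/
def upStepsMod (m c : ℕ) (p : List Bool) : ℕ :=
  ((Finset.range p.length).filter
    (fun i => p.getD i false = true ∧ stepHeight p i % m = c)).card

/-- The number of up steps of `p` ending at even height, when `p` starts at height `h`. -/
def evenUpSteps (h : ℕ) (p : List Bool) : ℕ :=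
  ((Finset.range p.length).filter (fun i => p.getD i false = true ∧
    (h + (p.take (i + 1)).count true - (p.take (i + 1)).count false) % 2 = 0)).card

lemma evenUpSteps_cons_true (h : ℕ) (p : List Bool) :
    evenUpSteps h (true :: p) = evenUpSteps (h + 1) p + if h % 2 = 1 then 1 else 0 := by
  have e (a b : ℕ) : h + (a + 1) - b = h + 1 + a - b := by omega
  have e' : (h + 1) % 2 = 0 ↔ h % 2 = 1 := by omega
  simp only [evenUpSteps, Finset.card_filter, List.length_cons, Finset.sum_range_succ']
  simp [-Finset.sum_boole, e]
  simp [e']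

lemma evenUpSteps_cons_false (h : ℕ) (p : List Bool) :
    evenUpSteps (h + 1) (false :: p) = evenUpSteps h p := by
  have e (a b : ℕ) : h + 1 + a - (b + 1) = h + a - b := by omega
  simp only [evenUpSteps, Finset.card_filter, List.length_cons, Finset.sum_range_succ']
  simp [-Finset.sum_boole, e]

/-- `p` is a path with `m` steps from height `h` to the x-axis, never going below it, and with
exactly `k` up steps ending at even height. -/
def IsPathFrom (m h k : ℕ) (p : List Bool) : Prop :=
  p.length = m ∧ h + p.count true = p.count false ∧
    (∀ i, (p.take i).count false ≤ h + (p.take i).count true) ∧ evenUpSteps h p = k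

lemma isPathFrom_nil (h k : ℕ) : IsPathFrom 0 h k [] ↔ h = 0 ∧ k = 0 := by
  simp [IsPathFrom, evenUpSteps, eq_comm]

lemma isPathFrom_cons_true (m h k : ℕ) (p : List Bool) :
    IsPathFrom (m + 1) h (k + if h % 2 = 1 then 1 else 0) (true :: p) ↔
      IsPathFrom m (h + 1) k p := by
  have hpre : (∀ i, ((true :: p).take i).count false ≤ h + ((true :: p).take i).count true) ↔
      ∀ i, (p.take i).count false ≤ h + 1 + (p.take i).count true := by
    constructor
    · intro H i
      have := H (i + 1)
      simp at this
      omega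
    · rintro H (_ | i)
      · simp
      · have := H i
        simp
        omega
  rw [IsPathFrom, IsPathFrom, hpre, evenUpSteps_cons_true]
  simp [add_assoc, add_comm 1]

lemma isPathFrom_cons_false (m h k : ℕ) (p : List Bool) :
    IsPathFrom (m + 1) (h + 1) k (false :: p) ↔ IsPathFrom m h k p := by
  have hpre : (∀ i, ((false :: p).take i).count false ≤
      h + 1 + ((false :: p).take i).count true) ↔
      ∀ i, (p.take i).count false ≤ h + (p.take i).count true := by
    constructor
    · intro H i
      have := H (i + 1)
      simp at this
      omega
    · rintro H (_ | i)
      · simp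
      · have := H i
        simp
        omega
  rw [IsPathFrom, IsPathFrom, hpre, evenUpSteps_cons_false]
  have : h + 1 + p.count true = p.count false + 1 ↔ h + p.count true = p.count false := by omega
  simp [this]

lemma not_isPathFrom_zero_cons_false (m k : ℕ) (p : List Bool) :
    ¬ IsPathFrom m 0 k (false :: p) := by
  rintro ⟨-, -, H, -⟩
  simpa using H 1

lemma not_isPathFrom_zero_evenUpSteps_cons_true (m h : ℕ) (hh : h % 2 = 1) (p : List Bool) :
    ¬ IsPathFrom m h 0 (true :: p) := by
  rintro ⟨-, -, -, H⟩
  simp [evenUpSteps_cons_true, hh] at H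

/-- The finite set of paths satisfying `IsPathFrom m h k`. -/
def pathsFrom : ℕ → ℕ → ℕ → Finset (List Bool)
  | 0, h, k => if h = 0 ∧ k = 0 then {[]} else ∅
  | m + 1, h, k =>
    (if h % 2 = 1 then (match k with | 0 => ∅ | k + 1 => pathsFrom m (h + 1) k)
      else pathsFrom m (h + 1) k).image (List.cons true) ∪
    (match h with | 0 => ∅ | h + 1 => pathsFrom m h k).image (List.cons false)

lemma mem_pathsFrom {m h k : ℕ} {p : List Bool} : p ∈ pathsFrom m h k ↔ IsPathFrom m h k p := by
  induction m generalizing h k p with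
  | zero =>
    cases p with
    | nil => rw [isPathFrom_nil, pathsFrom]; split_ifs <;> simp_all
    | cons a p => rw [pathsFrom.eq_def]; dsimp only; split_ifs <;> simp [IsPathFrom]
  | succ m ih =>
    rw [pathsFrom.eq_def]
    rcases p with _ | ⟨_ | _, p⟩
    · simp [IsPathFrom]
    · cases h with
      | zero => simp [not_isPathFrom_zero_cons_false]
      | succ h => simp [isPathFrom_cons_false, ih]
    · by_cases hh : h % 2 = 1
      · cases k with
        | zero => simp [hh, not_isPathFrom_zero_evenUpSteps_cons_true]
        | succ k =>
          have := isPathFrom_cons_true m h k p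
          simp only [hh, if_true] at this
          simp [hh, ih, this]
      · have := isPathFrom_cons_true m h k p
        simp only [hh, if_false, add_zero] at this
        simp [hh, ih, this]

lemma card_image_cons_union (s t : Finset (List Bool)) :
    (s.image (List.cons true) ∪ t.image (List.cons false)).card = s.card + t.card := by
  rw [Finset.card_union_of_disjoint, Finset.card_image_of_injective _ (List.cons_injective),
    Finset.card_image_of_injective _ (List.cons_injective)]
  simp [Finset.disjoint_left]

lemma card_pathsFrom_even_zero (m k : ℕ) :
    (pathsFrom (m + 1) 0 k).card = (pathsFrom m 1 k).card := by
  rw [pathsFrom.eq_def, card_image_cons_union]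
  simp

lemma card_pathsFrom_even_succ (m j k : ℕ) :
    (pathsFrom (m + 1) (2 * j + 2) k).card =
      (pathsFrom m (2 * (j + 1) + 1) k).card + (pathsFrom m (2 * j + 1) k).card := by
  rw [pathsFrom.eq_def, card_image_cons_union]
  simp [mul_add]

lemma card_pathsFrom_odd_zero (m j : ℕ) :
    (pathsFrom (m + 1) (2 * j + 1) 0).card = (pathsFrom m (2 * j) 0).card := by
  rw [pathsFrom.eq_def, card_image_cons_union]
  simp [Nat.add_mod]

lemma card_pathsFrom_odd_succ (m j k : ℕ) :
    (pathsFrom (m + 1) (2 * j + 1) (k + 1)).card =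
      (pathsFrom m (2 * j + 2) k).card + (pathsFrom m (2 * j) (k + 1)).card := by
  rw [pathsFrom.eq_def, card_image_cons_union]
  simp [Nat.add_mod]

lemma cast_choose_succ_left (m k : ℕ) :
    ((m + 1).choose k : ℤ) = m.choose k + if k = 0 then 0 else (m.choose (k - 1) : ℤ) := by
  rcases k with _ | k <;> simp [Nat.choose_succ_succ, add_comm]

lemma card_pathsFrom_odd_height (m j k : ℕ) :
    ((pathsFrom (2 * m + 1) (2 * j + 1) k).card : ℤ) =
      m.choose k * m.choose (k + j) -
        (if k = 0 then 0 else (m.choose (k - 1) : ℤ)) * m.choose (k + j + 1) := by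
  induction m generalizing j k with
  | zero =>
    rcases k with _ | k
    · rcases j with _ | j <;> simp [pathsFrom]
    · simp [pathsFrom]
  | succ m ih =>
    have pascal (i : ℕ) : ((m + 1).choose (i + 1) : ℤ) = m.choose i + m.choose (i + 1) := by
      simp [Nat.choose_succ_succ]
    rw [show 2 * (m + 1) + 1 = 2 * m + 1 + 1 + 1 by ring]
    rcases k with _ | k
    · rw [card_pathsFrom_odd_zero]
      rcases j with _ | j
      · rw [mul_zero, card_pathsFrom_even_zero]
        simpa using ih 0 0
      · rw [mul_add, mul_one, card_pathsFrom_even_succ]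
        push_cast
        rw [ih, ih]
        simp [Nat.choose_succ_succ]
        ring
    · rw [card_pathsFrom_odd_succ, card_pathsFrom_even_succ]
      rcases j with _ | j
      · rw [mul_zero, card_pathsFrom_even_zero]
        have h₁ := ih 0 (k + 1)
        have h₂ := ih 1 k
        have h₃ := ih 0 k
        simp only [mul_zero, zero_add, add_zero, Nat.add_eq_zero_iff, one_ne_zero, and_false,
          if_false, Nat.add_sub_cancel, Nat.cast_add] at h₁ h₂ h₃ ⊢
        rw [h₁, h₂, h₃, cast_choose_succ_left m k, pascal, pascal]
        ring
      · rw [show 2 * (j + 1) = 2 * j + 2 by ring, card_pathsFrom_even_succ]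
        simp only [Nat.cast_add, ih, show 2 * j + 2 = 2 * (j + 1) by ring,
          show k + 1 + (j + 1) = k + j + 1 + 1 by ring, show k + (j + 1 + 1) = k + j + 1 + 1 by ring,
          show k + (j + 1) = k + j + 1 by ring, show k + 1 + j = k + j + 1 by ring, pascal,
          cast_choose_succ_left m k, Nat.add_eq_zero_iff, one_ne_zero, and_false,
          if_false, Nat.add_sub_cancel]
        ring

lemma succ_mul_choose_sq_sub (m k : ℕ) (hk : k ≤ m) :
    ((m : ℤ) + 1) * (m.choose k * m.choose k -
      (if k = 0 then 0 else (m.choose (k - 1) : ℤ)) * m.choose (k + 1)) =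
      (m + 1).choose k * (m + 1).choose (k + 1) := by
  rcases k with _ | k
  · simp
  · have h₁ : ((k : ℤ) + 1) * m.choose (k + 1) = (m - k) * m.choose k := by
      have := Nat.choose_succ_right_eq m k
      zify [show k ≤ m by omega] at this
      linarith
    have h₂ : ((k : ℤ) + 2) * m.choose (k + 2) = (m - k - 1) * m.choose (k + 1) := by
      have := Nat.choose_succ_right_eq m (k + 1)
      zify [hk] at this
      linarith
    simp only [Nat.choose_succ_succ m, Nat.cast_add, Nat.add_eq_zero_iff, one_ne_zero, and_false,
      if_false, Nat.add_sub_cancel]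
    generalize (m.choose k : ℤ) = y at *
    generalize hx : (m.choose (k + 1) : ℤ) = x at *
    generalize hz : (m.choose (k + 1 + 1) : ℤ) = z at *
    linear_combination (x + z) * h₁ - (x + y) * h₂

/-- The number of Dyck paths of semilength `n` with exactly `k` up steps at even
height is the Narayana number `N(n,k) = (1/n) * C(n,k) * C(n,k+1)`. -/
theorem narayana_upSteps_even_height (n k : ℕ) (hn : 1 ≤ n) (hk : k ≤ n - 1) :
    Nat.card {p : List Bool // IsDyckPath n p ∧ upStepsMod 2 0 p = k} =
      n.choose k * n.choose (k + 1) / n := by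
  obtain ⟨m, rfl⟩ : ∃ m, n = m + 1 := ⟨n - 1, by omega⟩
  have hpath (p : List Bool) :
      (IsDyckPath (m + 1) p ∧ upStepsMod 2 0 p = k) ↔ p ∈ pathsFrom (2 * m + 2) 0 k := by
    have hlen : p.count true + p.count false = p.length := List.count_true_add_count_false p
    have heven : upStepsMod 2 0 p = evenUpSteps 0 p := by
      simp [upStepsMod, evenUpSteps, stepHeight]
    rw [mem_pathsFrom, IsDyckPath, IsPathFrom, heven]
    simp only [zero_add, and_assoc]
    constructor
    · rintro ⟨h₁, h₂, h₃, h₄⟩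
      exact ⟨by omega, by omega, h₃, h₄⟩
    · rintro ⟨h₁, h₂, h₃, h₄⟩
      exact ⟨by omega, by omega, h₃, h₄⟩
  have hcard : Nat.card {p : List Bool // IsDyckPath (m + 1) p ∧ upStepsMod 2 0 p = k} =
      (pathsFrom (2 * m + 1) 1 k).card := by
    rw [Nat.card_congr (Equiv.subtypeEquivRight hpath), Nat.card_eq_fintype_card,
      Fintype.card_coe, card_pathsFrom_even_zero]
  rw [hcard]
  refine (Nat.div_eq_of_eq_mul_right m.succ_pos ?_).symm
  have h := card_pathsFrom_odd_height m 0 k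
  zify
  rw [← succ_mul_choose_sq_sub m k (by omega)]
  simp only [mul_zero, zero_add, add_zero] at h
  rw [h]
end

section
/- For all n ≥ 1 and 0 ≤ k ≤ n-2, the number of Dyck paths of semilength n with exactly k exterior pairs equals the number of Dyck paths of semilength n with exactly k up steps at height h with h ≡ 0 (mod 3). -/
/-- The up step at position `i` is matched with the down step at position `j`:
the steps strictly between them form a balanced nonnegative (Dyck) word. -/
def Matched (p : List Bool) (i j : ℕ) : Prop :=
  i < j ∧ j < p.length ∧ p.getD i false = true ∧ p.getD j true = false ∧
  (((p.drop (i + 1)).take (j - i - 1)).count true =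
      ((p.drop (i + 1)).take (j - i - 1)).count false) ∧
  ∀ k < j - i - 1,
    ((((p.drop (i + 1)).take (j - i - 1)).take k).count false ≤
      (((p.drop (i + 1)).take (j - i - 1)).take k).count true)

/-- The section of `p` from position `a` to position `b` (inclusive) is a pyramid
`U^h D^h`. -/
def IsPyramidSec (p : List Bool) (a b : ℕ) : Prop :=
  a ≤ b ∧ b < p.length ∧ b - a + 1 = 2 * ((b - a + 1) / 2) ∧
  (p.drop a).take (b - a + 1) =
    List.replicate ((b - a + 1) / 2) true ++ List.replicate ((b - a + 1) / 2) false

/-- A matched pair `(i, j)` is exterior if it does not belong to any pyramid,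
equivalently the section of the path from `i` to `j` is not of the form `U^t D^t`. -/
def ExteriorPair (p : List Bool) (i j : ℕ) : Prop :=
  Matched p i j ∧ ¬ IsPyramidSec p i j

open scoped Classical in
/-- The number of exterior pairs of `p`. -/
noncomputable def exteriorPairs (p : List Bool) : ℕ :=
  ((Finset.range p.length ×ˢ Finset.range p.length).filter
    (fun q : ℕ × ℕ => ExteriorPair p q.1 q.2)).card

open Polynomial BinaryTree in
/-- The generating function, by number of nodes, of binary trees weighted by `w`. -/
noncomputable def treeSeries (w : BinaryTree Unit → ℤ[X]) : PowerSeries ℤ[X] :=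
  PowerSeries.mk fun n => ∑ T ∈ treesOfNumNodesEq n, w T

section GeneratingFunctions

open Polynomial BinaryTree

theorem treeSeries_eq_of_node {w f g : BinaryTree Unit → ℤ[X]} (h₁ : w nil = 1)
    (h₂ : ∀ l r, w (node () l r) = f l * g r) :
    treeSeries w = 1 + PowerSeries.X * (treeSeries f * treeSeries g) := by
  ext1 n
  cases n with
  | zero => simp [treeSeries, h₁]
  | succ n =>
    have hd : ((Finset.HasAntidiagonal.antidiagonal n : Finset (ℕ × ℕ)) : Set (ℕ × ℕ)).PairwiseDisjoint
        fun ij => pairwiseNode (treesOfNumNodesEq ij.1) (treesOfNumNodesEq ij.2) := by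
      simp_rw [Set.PairwiseDisjoint, Set.Pairwise, Finset.disjoint_left]
      aesop
    rw [map_add, PowerSeries.coeff_succ_X_mul, PowerSeries.coeff_mul, PowerSeries.coeff_one,
      if_neg n.succ_ne_zero, zero_add]
    simp only [treeSeries, PowerSeries.coeff_mk]
    rw [treesOfNumNodesEq_succ, Finset.sum_biUnion hd]
    refine Finset.sum_congr rfl fun ij _ => ?_
    rw [Finset.sum_map, Finset.sum_mul_sum, ← Finset.sum_product']
    exact Finset.sum_congr rfl fun x _ => h₂ _ _

theorem treeSeries_add (f g : BinaryTree Unit → ℤ[X]) :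
    treeSeries (fun T => f T + g T) = treeSeries f + treeSeries g := by
  ext1 n
  simp [treeSeries, Finset.sum_add_distrib]

theorem treeSeries_mul_left (c : ℤ[X]) (f : BinaryTree Unit → ℤ[X]) :
    treeSeries (fun T => c * f T) = PowerSeries.C c * treeSeries f := by
  ext1 n
  simp [treeSeries, Finset.mul_sum]

theorem treeSeries_eq_one {w : BinaryTree Unit → ℤ[X]} (h₁ : w nil = 1)
    (h₂ : ∀ l r, w (node () l r) = 0) : treeSeries w = 1 := by
  have h₀ : treeSeries (fun _ => 0) = 0 := by ext1 n; simp [treeSeries]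
  rw [treeSeries_eq_of_node (f := fun _ => 0) (g := fun _ => 0) h₁ (by simpa using h₂), h₀]
  simp

end GeneratingFunctions

/-- The tree encodes a pyramid `U^h D^h`: every node has an empty right subtree. -/
def IsPyramidTree : BinaryTree Unit → Prop
  | .nil => True
  | .node _ l r => IsPyramidTree l ∧ r = .nil

open scoped Classical in
/-- The number of exterior pairs of the Dyck path encoded by a tree. -/
noncomputable def exteriorNodes : BinaryTree Unit → ℕ
  | .nil => 0
  | .node _ l r => (if IsPyramidTree l then 0 else 1) + exteriorNodes l + exteriorNodes r

/-- The number of up steps at height divisible by three of the Dyck path encoded by a tree,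
when the path starts at height `h`. -/
def upNodes : ℕ → BinaryTree Unit → ℕ
  | _, .nil => 0
  | h, .node _ l r => (if (h + 1) % 3 = 0 then 1 else 0) + upNodes (h + 1) l + upNodes h r

theorem upNodes_add_three (h : ℕ) (T : BinaryTree Unit) : upNodes (h + 3) T = upNodes h T := by
  induction T generalizing h with
  | nil => rfl
  | node _ l r ihl ihr =>
    have := ihl (h + 1)
    simp only [upNodes, ihr, show h + 3 + 1 = h + 1 + 3 by ring, this, Nat.add_mod_right]

theorem IsPyramidTree.exteriorNodes_eq_zero {T : BinaryTree Unit} (hT : IsPyramidTree T) :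
    exteriorNodes T = 0 := by
  induction T with
  | nil => rfl
  | node _ l r ihl _ =>
    obtain ⟨hl, rfl⟩ := hT
    simp [exteriorNodes, hl, ihl hl]

section Equidistribution

open Polynomial BinaryTree

open scoped Classical in
theorem treeSeries_exteriorNodes :
    PowerSeries.C X * PowerSeries.X * (1 - PowerSeries.X) *
        treeSeries (fun T => X ^ exteriorNodes T) ^ 2 -
      (1 - 2 * PowerSeries.X + PowerSeries.C X * PowerSeries.X) *
        treeSeries (fun T => X ^ exteriorNodes T) + (1 - PowerSeries.X) = 0 := by
  set E := treeSeries (fun T => X ^ exteriorNodes T)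
  set P := treeSeries (fun T => if IsPyramidTree T then 1 else 0) with hP
  have hP' : P = 1 + PowerSeries.X * P := by
    have h := treeSeries_eq_of_node (w := fun T => if IsPyramidTree T then 1 else 0)
      (f := fun T => if IsPyramidTree T then 1 else 0) (g := fun T => if T = nil then 1 else 0)
      (by simp [IsPyramidTree]) fun l r => by
        by_cases hl : IsPyramidTree l <;> by_cases hr : r = nil <;> simp [IsPyramidTree, hl, hr]
    rwa [← hP, treeSeries_eq_one (by simp) (by simp), mul_one] at h
  have hE : E = 1 + PowerSeries.X *
      ((PowerSeries.C X * E + PowerSeries.C (1 - X) * P) * E) := by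
    rw [← treeSeries_mul_left, ← treeSeries_mul_left, ← treeSeries_add]
    refine treeSeries_eq_of_node (by simp [exteriorNodes]) fun l r => ?_
    by_cases hl : IsPyramidTree l
    · simp [exteriorNodes, hl, hl.exteriorNodes_eq_zero]
    · simp [exteriorNodes, hl, pow_add]
  rw [map_sub, map_one] at hE
  linear_combination (PowerSeries.X - 1) * hE +
    PowerSeries.X * (PowerSeries.C X - 1) * E * hP'

theorem treeSeries_upNodes :
    PowerSeries.C X * PowerSeries.X * (1 - PowerSeries.X) *
        treeSeries (fun T => X ^ upNodes 0 T) ^ 2 -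
      (1 - 2 * PowerSeries.X + PowerSeries.C X * PowerSeries.X) *
        treeSeries (fun T => X ^ upNodes 0 T) + (1 - PowerSeries.X) = 0 := by
  set F₀ := treeSeries (fun T => X ^ upNodes 0 T)
  set F₁ := treeSeries (fun T => X ^ upNodes 1 T)
  set F₂ := treeSeries (fun T => X ^ upNodes 2 T)
  have h₀ : F₀ = 1 + PowerSeries.X * (F₁ * F₀) :=
    treeSeries_eq_of_node (by simp [upNodes]) fun l r => by simp [upNodes, pow_add]
  have h₁ : F₁ = 1 + PowerSeries.X * (F₂ * F₁) :=
    treeSeries_eq_of_node (by simp [upNodes]) fun l r => by simp [upNodes, pow_add]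
  have h₂ : F₂ = 1 + PowerSeries.X * (PowerSeries.C X * F₀ * F₂) := by
    rw [← treeSeries_mul_left]
    refine treeSeries_eq_of_node (by simp [upNodes]) fun l r => ?_
    simp [upNodes, pow_add, upNodes_add_three 0 l]
  linear_combination
    (-(1 - PowerSeries.C X * PowerSeries.X * F₀ - PowerSeries.X)) * h₀ -
      PowerSeries.X * F₀ * (1 - PowerSeries.C X * PowerSeries.X * F₀) * h₁ -
      PowerSeries.X ^ 2 * F₀ * F₁ * h₂

theorem treeSeries_exteriorNodes_eq_treeSeries_upNodes :
    treeSeries (fun T => X ^ exteriorNodes T) = treeSeries (fun T => X ^ upNodes 0 T) := by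
  have hE := treeSeries_exteriorNodes
  have hF := treeSeries_upNodes
  set E := treeSeries (fun T => X ^ exteriorNodes T)
  set F := treeSeries (fun T => X ^ upNodes 0 T)
  have h : (PowerSeries.C X * PowerSeries.X * (1 - PowerSeries.X) * (E + F) -
      (1 - 2 * PowerSeries.X + PowerSeries.C X * PowerSeries.X)) * (E - F) = 0 := by
    linear_combination hE - hF
  refine sub_eq_zero.1 ((mul_eq_zero.1 h).resolve_left fun h => ?_)
  simpa using congrArg PowerSeries.constantCoeff h

theorem card_filter_exteriorNodes_eq (n k : ℕ) :
    ((treesOfNumNodesEq n).filter fun T => exteriorNodes T = k).card =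
      ((treesOfNumNodesEq n).filter fun T => upNodes 0 T = k).card := by
  have h := congrArg (fun s => (PowerSeries.coeff n s).coeff k)
    treeSeries_exteriorNodes_eq_treeSeries_upNodes
  simpa [treeSeries, finsetSum_coeff, coeff_X_pow, eq_comm (a := k)] using h

end Equidistribution

section TreeWord

/-- The Dyck path encoded by a binary tree. -/
def treeWord (T : BinaryTree Unit) : List Bool :=
  (DyckWord.ofTree T).toList.map (· = DyckStep.U)

theorem injective_decide_eq_U : Function.Injective fun s : DyckStep => decide (s = DyckStep.U) := by
  intro a b
  cases a <;> cases b <;> simp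

@[simp]
theorem treeWord_nil : treeWord .nil = [] := rfl

@[simp]
theorem treeWord_node (u : Unit) (l r : BinaryTree Unit) :
    treeWord (.node u l r) = true :: (treeWord l ++ false :: treeWord r) := by
  change List.map _ (([DyckStep.U] ++ (DyckWord.ofTree l).toList ++ [DyckStep.D]) ++
    (DyckWord.ofTree r).toList) = _
  simp [treeWord]

theorem treeWord_injective : Function.Injective treeWord := fun _ _ h =>
  DyckWord.equivTree.symm.injective
    (DyckWord.ext (List.map_injective_iff.2 injective_decide_eq_U h))

theorem count_true_map_decide (L : List DyckStep) :
    (L.map fun s => decide (s = DyckStep.U)).count true = L.count DyckStep.U :=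
  List.count_map_of_injective L _ injective_decide_eq_U DyckStep.U

theorem count_false_map_decide (L : List DyckStep) :
    (L.map fun s => decide (s = DyckStep.U)).count false = L.count DyckStep.D :=
  List.count_map_of_injective L _ injective_decide_eq_U DyckStep.D

theorem isDyckPath_treeWord (T : BinaryTree Unit) : IsDyckPath T.numNodes (treeWord T) := by
  have hs : (DyckWord.ofTree T).semilength = T.numNodes := by
    rw [← DyckWord.numNodes_toTree, DyckWord.toTree_ofTree]
  refine ⟨?_, ?_, fun i => ?_⟩
  · rw [treeWord, List.length_map, ← DyckWord.two_mul_semilength_eq_length, hs]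
  · rw [treeWord, count_true_map_decide, ← hs, DyckWord.semilength]
  · rw [treeWord, ← List.map_take, count_true_map_decide, count_false_map_decide]
    exact (DyckWord.ofTree T).count_D_le_count_U i

theorem count_true_treeWord (T : BinaryTree Unit) :
    (treeWord T).count true = (treeWord T).count false := by
  rw [treeWord, count_true_map_decide, count_false_map_decide]
  exact (DyckWord.ofTree T).count_U_eq_count_D

theorem IsDyckPath.exists_treeWord {n : ℕ} {p : List Bool} (hp : IsDyckPath n p) :
    ∃ T, T.numNodes = n ∧ treeWord T = p := by
  obtain ⟨hl, ht, hp⟩ := hp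
  set L := p.map fun b => if b then DyckStep.U else DyckStep.D with hL
  have hLp : (L.map fun s => decide (s = DyckStep.U)) = p := by
    rw [hL, List.map_map]
    refine List.map_id'' (fun b => ?_) p
    cases b <;> simp
  have hf : p.count true + p.count false = p.length := List.count_true_add_count_false p
  let q : DyckWord := ⟨L, by
      rw [← count_true_map_decide, ← count_false_map_decide, hLp]; lia, fun i => by
      rw [← count_true_map_decide, ← count_false_map_decide, List.map_take, hLp]; exact hp i⟩
  have hq : treeWord q.toTree = p := by rw [treeWord, DyckWord.ofTree_toTree]; exact hLp
  refine ⟨q.toTree, ?_, hq⟩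
  rw [← ht, ← hq, (isDyckPath_treeWord _).2.1]

theorem card_isDyckPath_and_eq {stat : List Bool → ℕ} {f : BinaryTree Unit → ℕ}
    (h : ∀ T, stat (treeWord T) = f T) (n k : ℕ) :
    Nat.card {p : List Bool // IsDyckPath n p ∧ stat p = k} =
      ((BinaryTree.treesOfNumNodesEq n).filter fun T => f T = k).card := by
  rw [← Finset.card_map ⟨treeWord, treeWord_injective⟩]
  refine Nat.subtype_card _ fun p => ?_
  simp only [Finset.mem_map, Finset.mem_filter, BinaryTree.mem_treesOfNumNodesEq,
    Function.Embedding.coeFn_mk]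
  constructor
  · rintro ⟨T, ⟨rfl, rfl⟩, rfl⟩
    exact ⟨isDyckPath_treeWord T, h T⟩
  · rintro ⟨hp, rfl⟩
    obtain ⟨T, hT, rfl⟩ := hp.exists_treeWord
    exact ⟨T, ⟨hT, (h T).symm⟩, rfl⟩

end TreeWord

section UpSteps

/-- The number of up steps at height divisible by three in a path starting at height `h`. -/
def upStepCount : ℕ → List Bool → ℕ
  | _, [] => 0
  | h, true :: p => (if (h + 1) % 3 = 0 then 1 else 0) + upStepCount (h + 1) p
  | h, false :: p => upStepCount (h - 1) p

theorem upStepCount_treeWord_append (h : ℕ) (T : BinaryTree Unit) (s : List Bool) :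
    upStepCount h (treeWord T ++ s) = upNodes h T + upStepCount h s := by
  induction T generalizing h s with
  | nil => simp [upNodes]
  | node _ l r ihl ihr => simp [upStepCount, upNodes, ihl, ihr, add_assoc]

theorem card_filter_upStep_eq_upStepCount (p : List Bool) (h : ℕ)
    (hp : ∀ i, (p.take i).count false ≤ h + (p.take i).count true) :
    ((Finset.range p.length).filter fun i => p.getD i false = true ∧
      (h + (p.take (i + 1)).count true - (p.take (i + 1)).count false) % 3 = 0).card =
      upStepCount h p := by
  induction p generalizing h with
  | nil => rfl
  | cons b p ih =>
    rw [Finset.card_filter, List.length_cons, Finset.sum_range_succ', ← Finset.card_filter]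
    cases b with
    | true =>
      rw [upStepCount, ← ih (h + 1) fun i => by have := hp (i + 1); simp at this; lia, add_comm]
      simp [add_assoc, add_comm 1]
    | false =>
      have h1 := hp 1
      simp only [List.take_succ_cons, List.take_zero, List.count_singleton] at h1
      obtain ⟨h, rfl⟩ : ∃ m, h = m + 1 := ⟨h - 1, by simp at h1; lia⟩
      rw [upStepCount, ← ih _ fun i => by have := hp (i + 1); simp at this; lia]
      simp [add_right_comm h 1, Nat.add_sub_add_right]

theorem upStepsMod_treeWord (T : BinaryTree Unit) : upStepsMod 3 0 (treeWord T) = upNodes 0 T := by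
  have h := card_filter_upStep_eq_upStepCount (treeWord T) 0 fun i => by
    simpa using (isDyckPath_treeWord T).2.2 i
  have h' := upStepCount_treeWord_append 0 T []
  simp only [List.append_nil] at h'
  rw [h'] at h
  simpa [upStepsMod, stepHeight, upStepCount] using h

end UpSteps

section Exterior

/-- The down step at position `d` of `q` matches an up step placed just before `q`. -/
def Closes (q : List Bool) (d : ℕ) : Prop :=
  q[d]? = some false ∧ (q.take d).count true = (q.take d).count false ∧
    ∀ k ≤ d, (q.take k).count false ≤ (q.take k).count true

theorem Closes.le {q : List Bool} {d e : ℕ} (hd : Closes q d) (he : Closes q e) : e ≤ d := by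
  by_contra! h
  have hk := he.2.2 (d + 1) h
  rw [List.take_add_one, hd.1] at hk
  simp [hd.2.1] at hk

theorem Closes.unique {q : List Bool} {d e : ℕ} (hd : Closes q d) (he : Closes q e) : d = e :=
  le_antisymm (he.le hd) (hd.le he)

theorem closes_treeWord (T : BinaryTree Unit) (s : List Bool) :
    Closes (treeWord T ++ false :: s) (treeWord T).length := by
  refine ⟨by simp, by simpa using count_true_treeWord T, fun k hk => ?_⟩
  rw [List.take_append_of_le_length hk]
  exact (isDyckPath_treeWord T).2.2 k

/-- The path has the form `U^h D^h`. -/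
def IsPyramid (p : List Bool) : Prop :=
  ∃ h, p = List.replicate h true ++ List.replicate h false

theorem isPyramid_cons_append_singleton (p : List Bool) :
    IsPyramid (true :: (p ++ [false])) ↔ IsPyramid p := by
  constructor
  · rintro ⟨_ | h, hh⟩
    · simp at hh
    · rw [List.replicate_succ, List.replicate_succ', List.cons_append, ← List.append_assoc,
        List.cons_inj_right, List.append_cancel_right_eq] at hh
      exact ⟨h, hh⟩
  · rintro ⟨h, rfl⟩
    exact ⟨h + 1, by simp [List.replicate_succ, ← List.replicate_succ']⟩

theorem IsPyramid.pairwise {p : List Bool} (hp : IsPyramid p) : p.Pairwise (· ≥ ·) := by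
  obtain ⟨h, rfl⟩ := hp
  simp [List.pairwise_append, List.pairwise_replicate]

theorem isPyramid_treeWord (T : BinaryTree Unit) : IsPyramid (treeWord T) ↔ IsPyramidTree T := by
  induction T with
  | nil => exact ⟨fun _ => trivial, fun _ => ⟨0, rfl⟩⟩
  | node _ l r ihl ihr =>
    rw [IsPyramidTree, ← ihl, treeWord_node]
    constructor
    · intro h
      have hr : r = .nil := by
        have hp := (List.pairwise_cons.1 (List.pairwise_append.1
          (List.pairwise_cons.1 h.pairwise).2).2.1).1
        apply treeWord_injective
        have h0 : (treeWord r).count true = 0 :=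
          List.count_eq_zero.2 fun ht => absurd (hp _ ht) (by decide)
        have hl := List.count_true_add_count_false (treeWord r)
        rw [← count_true_treeWord, h0] at hl
        exact List.length_eq_zero_iff.1 hl.symm
      subst hr
      exact ⟨(isPyramid_cons_append_singleton _).1 h, rfl⟩
    · rintro ⟨h, rfl⟩
      exact (isPyramid_cons_append_singleton _).2 h

/-- The path starts with the up step of an exterior pair. -/
def OpensExterior (p : List Bool) : Prop :=
  ∃ q d, p = true :: q ∧ Closes q d ∧ ¬ IsPyramid (true :: q.take (d + 1))

theorem opensExterior_cons_treeWord_append (T : BinaryTree Unit) (s : List Bool) :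
    OpensExterior (true :: (treeWord T ++ false :: s)) ↔ ¬ IsPyramidTree T := by
  have ht : (treeWord T ++ false :: s).take ((treeWord T).length + 1) = treeWord T ++ [false] := by
    simp [List.take_append]
  rw [← isPyramid_treeWord, ← isPyramid_cons_append_singleton, ← ht]
  constructor
  · rintro ⟨q, d, hq, hd, hp⟩
    obtain rfl := (List.cons.inj hq).2
    rwa [(closes_treeWord T s).unique hd]
  · exact fun h => ⟨_, _, rfl, closes_treeWord T s, h⟩

theorem not_opensExterior_false_cons (p : List Bool) : ¬ OpensExterior (false :: p) := by
  rintro ⟨q, d, hq, -⟩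
  simp at hq

open scoped Classical in
/-- The number of suffixes of a path that start with the up step of an exterior pair. -/
noncomputable def exteriorCount : List Bool → ℕ
  | [] => 0
  | b :: p => (if OpensExterior (b :: p) then 1 else 0) + exteriorCount p

theorem exteriorCount_treeWord_append (T : BinaryTree Unit) (s : List Bool) :
    exteriorCount (treeWord T ++ s) = exteriorNodes T + exteriorCount s := by
  induction T generalizing s with
  | nil => simp [exteriorNodes]
  | node _ l r ihl ihr =>
    have h := opensExterior_cons_treeWord_append l (treeWord r ++ s)
    simp only [treeWord_node, List.cons_append, List.append_assoc, exteriorCount, exteriorNodes,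
      not_opensExterior_false_cons, ihl, ihr]
    by_cases hl : IsPyramidTree l
    · rw [if_neg (mt h.1 (not_not.2 hl)), if_pos hl]
      simp [add_assoc]
    · rw [if_pos (h.2 hl), if_neg hl]
      simp [add_assoc]

open scoped Classical in
theorem card_filter_opensExterior (p : List Bool) :
    ((Finset.range p.length).filter fun i => OpensExterior (p.drop i)).card = exteriorCount p := by
  induction p with
  | nil => rfl
  | cons b p ih =>
    rw [Finset.card_filter, List.length_cons, Finset.sum_range_succ', exteriorCount, ← ih,
      Finset.card_filter, add_comm]
    simp

theorem matched_iff (p : List Bool) (i j : ℕ) :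
    Matched p i j ↔ ∃ q d, p.drop i = true :: q ∧ j = i + 1 + d ∧ Closes q d := by
  constructor
  · rintro ⟨hij, hj, hi, hf, hc, hk⟩
    obtain ⟨d, rfl⟩ := Nat.exists_eq_add_of_le (Nat.succ_le_of_lt hij)
    have hd : i.succ + d - i - 1 = d := by lia
    rw [hd] at hc hk
    refine ⟨p.drop (i + 1), d, ?_, rfl, ?_, hc, fun k hkd => ?_⟩
    · rw [List.drop_eq_getElem_cons (by lia), ← hi, List.getD_eq_getElem _ _ (by lia)]
    · rw [List.getElem?_drop, List.getElem?_eq_getElem hj, ← hf, List.getD_eq_getElem]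
    · rcases hkd.lt_or_eq with h | rfl
      · simpa [List.take_take, h.le] using hk k h
      · exact hc.ge
  · rintro ⟨q, d, hq, rfl, hf, hc, hk⟩
    have hq' : p.drop (i + 1) = q := by rw [← List.tail_drop, hq, List.tail_cons]
    have hi : p[i]? = some true := by
      have := congrArg (·[0]?) hq
      simpa using this
    have hj : p[i + 1 + d]? = some false := by
      rw [← List.getElem?_drop, hq', hf]
    have hd : i + 1 + d - i - 1 = d := by lia
    refine ⟨by lia, (List.getElem?_eq_some_iff.1 hj).1, by simp [List.getD, hi],
      by simp [List.getD, hj], ?_, fun k hkd => ?_⟩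
    · rw [hd, hq', hc]
    · rw [hd] at hkd ⊢
      rw [hq', List.take_take, min_eq_left hkd.le]
      exact hk k hkd.le

theorem isPyramidSec_iff {p : List Bool} {a b : ℕ} (hab : a ≤ b) (hb : b < p.length) :
    IsPyramidSec p a b ↔ IsPyramid ((p.drop a).take (b - a + 1)) := by
  constructor
  · exact fun h => ⟨_, h.2.2.2⟩
  · rintro ⟨h, hh⟩
    have hl := congrArg List.length hh
    simp only [List.length_take, List.length_drop, List.length_append, List.length_replicate] at hl
    have h2 : (b - a + 1) / 2 = h := by lia
    exact ⟨hab, hb, by lia, by rw [h2, hh]⟩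

theorem exteriorPair_iff (p : List Bool) (i j : ℕ) :
    ExteriorPair p i j ↔ ∃ q d, p.drop i = true :: q ∧ j = i + 1 + d ∧ Closes q d ∧
      ¬ IsPyramid (true :: q.take (d + 1)) := by
  constructor
  · rintro ⟨hm, hp⟩
    rw [isPyramidSec_iff hm.1.le hm.2.1] at hp
    obtain ⟨q, d, hq, rfl, hd⟩ := (matched_iff p i j).1 hm
    refine ⟨q, d, hq, rfl, hd, ?_⟩
    rwa [hq, show i + 1 + d - i + 1 = d + 1 + 1 by lia, List.take_succ_cons] at hp
  · rintro ⟨q, d, hq, rfl, hd, hp⟩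
    have hm := (matched_iff p i (i + 1 + d)).2 ⟨q, d, hq, rfl, hd⟩
    refine ⟨hm, ?_⟩
    rwa [isPyramidSec_iff hm.1.le hm.2.1, hq, show i + 1 + d - i + 1 = d + 1 + 1 by lia,
      List.take_succ_cons]

theorem exteriorPairs_eq_exteriorCount (p : List Bool) : exteriorPairs p = exteriorCount p := by
  classical
  rw [exteriorPairs, ← card_filter_opensExterior]
  refine Finset.card_bij (fun x _ => x.1) ?_ ?_ ?_
  · simp only [Finset.mem_filter, Finset.mem_product]
    rintro ⟨i, j⟩ ⟨⟨hi, -⟩, h⟩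
    obtain ⟨q, d, hq, -, h⟩ := (exteriorPair_iff p i j).1 h
    exact ⟨hi, q, d, hq, h⟩
  · simp only [Finset.mem_filter]
    rintro ⟨i, j⟩ ⟨-, h⟩ ⟨i', j'⟩ ⟨-, h'⟩ hii
    obtain rfl : i = i' := hii
    obtain ⟨q, d, hq, rfl, hd, -⟩ := (exteriorPair_iff p i j).1 h
    obtain ⟨q', d', hq', rfl, hd', -⟩ := (exteriorPair_iff p i j').1 h'
    obtain rfl := (List.cons.inj (hq.symm.trans hq')).2
    rw [hd.unique hd']
  · simp only [Finset.mem_filter, Finset.mem_product, Finset.mem_range]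
    rintro i ⟨hi, q, d, hq, h⟩
    have he := (exteriorPair_iff p i (i + 1 + d)).2 ⟨q, d, hq, rfl, h⟩
    exact ⟨(i, i + 1 + d), ⟨⟨hi, he.1.2.1⟩, he⟩, rfl⟩

theorem exteriorPairs_treeWord (T : BinaryTree Unit) :
    exteriorPairs (treeWord T) = exteriorNodes T := by
  simpa [exteriorCount, exteriorPairs_eq_exteriorCount] using exteriorCount_treeWord_append T []

end Exterior

/-- The number of Dyck paths of semilength `n` with exactly `k` exterior pairs equals
the number of Dyck paths of semilength `n` with exactly `k` up steps at height
`h ≡ 0 (mod 3)`. -/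
theorem exteriorPairs_equidistributed_with_upSteps_mod_three (n k : ℕ)
    (hn : 1 ≤ n) (hk : k ≤ n - 2) :
    Nat.card {p : List Bool // IsDyckPath n p ∧ exteriorPairs p = k} =
      Nat.card {p : List Bool // IsDyckPath n p ∧ upStepsMod 3 0 p = k} := by
  rw [card_isDyckPath_and_eq exteriorPairs_treeWord, card_isDyckPath_and_eq upStepsMod_treeWord,
    card_filter_exteriorNodes_eq]
end

section
/- Let P(x,y) = Σ_{n,k≥0} p_{n,k} y^k x^n where p_{n,k} is the number of Dyck paths of semilength n with pyramid weight k. Then P satisfies P = 1 + x·(P - (1-y)/(1-xy))·P as formal power series. -/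
/-- The pyramid section from `a` to `b` is maximal: it is not contained in a higher
pyramid. -/
def MaximalPyramidSec (p : List Bool) (a b : ℕ) : Prop :=
  IsPyramidSec p a b ∧
    ¬ (1 ≤ a ∧ b + 1 < p.length ∧ IsPyramidSec p (a - 1) (b + 1))

open scoped Classical in
/-- The pyramid weight of `p`: the sum of the heights of its maximal pyramids. -/
noncomputable def pyramidWeight (p : List Bool) : ℕ :=
  ∑ q ∈ (Finset.range p.length ×ˢ Finset.range p.length).filter
      (fun q : ℕ × ℕ => MaximalPyramidSec p q.1 q.2),
    (q.2 - q.1 + 1) / 2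

open MvPowerSeries in
/-- `P(x,y) = Σ p_{n,k} y^k x^n` where `p_{n,k}` is the number of Dyck paths of
semilength `n` with pyramid weight `k`; `X 0` is `x` and `X 1` is `y`. -/
noncomputable def P : MvPowerSeries (Fin 2) ℚ :=
  fun d => (Nat.card {p : List Bool // IsDyckPath (d 0) p ∧ pyramidWeight p = d 1} : ℚ)


section WeightSeries

open MvPowerSeries

variable {σ S T : Type*}

/-- The generating function of `T` with respect to a weight `w`. -/
noncomputable def weightSeries (w : T → σ →₀ ℕ) : MvPowerSeries σ ℚ :=
  fun d => (Nat.card {t : T // w t = d} : ℚ)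

lemma coeff_weightSeries (w : T → σ →₀ ℕ) (d : σ →₀ ℕ) :
    coeff d (weightSeries w) = (Nat.card {t : T // w t = d} : ℚ) := rfl

lemma weightSeries_congr (e : S ≃ T) {v : S → σ →₀ ℕ} {w : T → σ →₀ ℕ}
    (h : ∀ s, w (e s) = v s) : weightSeries v = weightSeries w := by
  ext d
  simp only [coeff_weightSeries]
  exact congrArg _ (Nat.card_congr (e.subtypeEquiv fun s => by rw [h]))

lemma weightSeries_unit (d : σ →₀ ℕ) :
    weightSeries (fun _ : Unit => d) = monomial d (1 : ℚ) := by
  classical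
  ext e
  rw [coeff_weightSeries, coeff_monomial]
  split_ifs with h
  · subst h; simp
  · have : IsEmpty {t : Unit // d = e} := ⟨fun t => h t.2.symm⟩
    simp

lemma weightSeries_sum (v : S → σ →₀ ℕ) (w : T → σ →₀ ℕ)
    (hv : ∀ d, Finite {s // v s = d}) (hw : ∀ d, Finite {t // w t = d}) :
    weightSeries (Sum.elim v w) = weightSeries v + weightSeries w := by
  ext d
  have := hv d
  have := hw d
  rw [map_add]
  simp only [coeff_weightSeries]
  rw [← Nat.cast_add, ← Nat.card_sum]
  exact congrArg _ (Nat.card_congr Equiv.subtypeSum)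

/-- The fibre of a sum of weights on a product, split according to the two summands. -/
def fiberProdEquiv [DecidableEq σ] (v : S → σ →₀ ℕ) (w : T → σ →₀ ℕ) (d : σ →₀ ℕ) :
    {x : S × T // v x.1 + w x.2 = d} ≃
      Σ y : Finset.HasAntidiagonal.antidiagonal d, {s // v s = y.1.1} × {t // w t = y.1.2} where
  toFun x := ⟨⟨(v x.1.1, w x.1.2), Finset.HasAntidiagonal.mem_antidiagonal.2 x.2⟩,
    ⟨x.1.1, rfl⟩, ⟨x.1.2, rfl⟩⟩
  invFun y := ⟨(y.2.1.1, y.2.2.1), by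
    rw [y.2.1.2, y.2.2.2]; exact Finset.HasAntidiagonal.mem_antidiagonal.1 y.1.2⟩
  left_inv _ := rfl
  right_inv := by
    rintro ⟨⟨⟨a, b⟩, h⟩, ⟨s, hs⟩, ⟨t, ht⟩⟩
    dsimp only at hs ht
    subst hs ht
    rfl

lemma finite_fiber_prod {v : S → σ →₀ ℕ} {w : T → σ →₀ ℕ}
    (hv : ∀ d, Finite {s // v s = d}) (hw : ∀ d, Finite {t // w t = d}) (d : σ →₀ ℕ) :
    Finite {x : S × T // v x.1 + w x.2 = d} := by
  classical
  exact Finite.of_equiv _ (fiberProdEquiv v w d).symm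

lemma finite_fiber_add_left {w : T → σ →₀ ℕ} (hw : ∀ d, Finite {t // w t = d})
    (c d : σ →₀ ℕ) : Finite {t // c + w t = d} :=
  have := hw (d - c)
  Finite.of_injective (β := {t // w t = d - c})
    (fun t => ⟨t.1, eq_tsub_of_add_eq ((add_comm _ _).trans t.2)⟩)
    fun _ _ h => by simpa [Subtype.ext_iff] using h

lemma finite_fiber_comp {f : S → T} (hf : Function.Injective f) {w : T → σ →₀ ℕ}
    (hw : ∀ d, Finite {t // w t = d}) (d : σ →₀ ℕ) : Finite {s // w (f s) = d} :=
  have := hw d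
  Finite.of_injective (β := {t // w t = d}) (fun s => ⟨f s.1, s.2⟩)
    fun _ _ h => Subtype.ext (hf (congrArg Subtype.val h))

lemma weightSeries_prod (v : S → σ →₀ ℕ) (w : T → σ →₀ ℕ)
    (hv : ∀ d, Finite {s // v s = d}) (hw : ∀ d, Finite {t // w t = d}) :
    weightSeries (fun x : S × T => v x.1 + w x.2) = weightSeries v * weightSeries w := by
  classical
  ext d
  rw [coeff_mul]
  simp only [coeff_weightSeries]
  rw [← Finset.sum_coe_sort, Nat.card_congr (fiberProdEquiv v w d), Nat.card_sigma]
  push_cast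
  simp [Nat.card_prod]

lemma weightSeries_add_left (d : σ →₀ ℕ) (w : T → σ →₀ ℕ)
    (hw : ∀ e, Finite {t // w t = e}) :
    weightSeries (fun t => d + w t) = monomial d (1 : ℚ) * weightSeries w := by
  rw [← weightSeries_unit, ← weightSeries_prod _ _ (fun _ => inferInstance) hw]
  exact weightSeries_congr (Equiv.punitProd T).symm fun _ => rfl

lemma weightSeries_eq_subtype_add (s : T → Prop) (w : T → σ →₀ ℕ)
    (hw : ∀ d, Finite {t // w t = d}) :
    weightSeries w = weightSeries (fun t : {t // s t} => w t) +
      weightSeries (fun t : {t // ¬ s t} => w t) := by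
  classical
  rw [← weightSeries_sum _ _ (finite_fiber_comp Subtype.val_injective hw)
    (finite_fiber_comp Subtype.val_injective hw)]
  exact (weightSeries_congr (Equiv.sumCompl s) (by rintro (_ | _) <;> rfl)).symm

end WeightSeries

section PyramidCount

/-- The section of `p` of length `2 * h` starting at position `a` is `U^h D^h`. -/
def PyramidAt (p : List Bool) (a h : ℕ) : Prop :=
  ∀ k < h, p[a + k]? = some true ∧ p[a + h + k]? = some false

lemma isPyramidSec_iff_s10 (p : List Bool) (a b : ℕ) :
    IsPyramidSec p a b ↔ ∃ h, 0 < h ∧ b + 1 = a + 2 * h ∧ PyramidAt p a h := by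
  constructor
  · rintro ⟨hab, hb, hh, heq⟩
    refine ⟨(b - a + 1) / 2, by omega, by omega, fun k hk => ?_⟩
    generalize (b - a + 1) / 2 = h at *
    rw [hh] at heq
    have h1 := congrArg (·[k]?) heq
    have h2 := congrArg (·[h + k]?) heq
    simp only [List.getElem?_take, List.getElem?_drop, List.getElem?_append,
      List.getElem?_replicate, List.length_replicate] at h1 h2
    rw [if_pos (by omega), if_pos hk, if_pos hk] at h1
    rw [if_pos (by omega), if_neg (by omega), if_pos (by omega)] at h2
    exact ⟨h1, by rw [← h2]; congr 1; omega⟩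
  · rintro ⟨h, h0, hb, hp⟩
    have hlen := (List.getElem?_eq_some_iff.1 (hp (h - 1) (by omega)).2).1
    have e : b - a + 1 = 2 * h := by omega
    have e' : (b - a + 1) / 2 = h := by omega
    refine ⟨by omega, by omega, by omega, ?_⟩
    rw [e', e]
    ext1 i
    simp only [List.getElem?_take, List.getElem?_drop, List.getElem?_append,
      List.getElem?_replicate, List.length_replicate]
    split_ifs with h1 h2 h3 h3
    · exact (hp i h2).1
    · rw [← (hp (i - h) (by omega)).2]; congr 1; omega
    all_goals first | rfl | omega

lemma PyramidAt.sub {p : List Bool} {a h i : ℕ} (hp : PyramidAt p a h) (hi : i ≤ h) :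
    PyramidAt p (a + i) (h - i) := by
  intro k hk
  have h1 := (hp (i + k) (by omega)).1
  have h2 := (hp k (by omega)).2
  refine ⟨?_, ?_⟩
  · rw [← h1]; congr 1; omega
  · rw [← h2]; congr 1; omega

lemma PyramidAt.eq {p : List Bool} {a h h' : ℕ} (hp : PyramidAt p a h) (hp' : PyramidAt p a h')
    (h0 : 0 < h) (h0' : 0 < h') : h = h' := by
  by_contra hne
  rcases Nat.lt_or_gt_of_ne hne with hlt | hlt
  · simpa [(hp' h hlt).1] using (hp 0 h0).2
  · simpa [(hp h' hlt).1] using (hp' 0 h0').2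

lemma maximalPyramidSec_iff (p : List Bool) (a b : ℕ) :
    MaximalPyramidSec p a b ↔ ∃ h, 0 < h ∧ b + 1 = a + 2 * h ∧ PyramidAt p a h ∧
      ¬ (1 ≤ a ∧ PyramidAt p (a - 1) (h + 1)) := by
  rw [MaximalPyramidSec, isPyramidSec_iff_s10]
  constructor
  · rintro ⟨⟨h, h0, hb, hp⟩, hmax⟩
    refine ⟨h, h0, hb, hp, fun ⟨ha, hp'⟩ => hmax ?_⟩
    have : IsPyramidSec p (a - 1) (b + 1) :=
      (isPyramidSec_iff_s10 _ _ _).2 ⟨h + 1, by omega, by omega, hp'⟩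
    exact ⟨ha, this.2.1, this⟩
  · rintro ⟨h, h0, hb, hp, hmax⟩
    refine ⟨⟨h, h0, hb, hp⟩, fun ⟨ha, _, hs⟩ => hmax ⟨ha, ?_⟩⟩
    obtain ⟨h', _, hb', hp'⟩ := (isPyramidSec_iff_s10 _ _ _).1 hs
    obtain rfl : h' = h + 1 := by omega
    exact hp'

lemma PyramidAt.exists_maximal {p : List Bool} {a h : ℕ} (hp : PyramidAt p a h) :
    ∃ a' h', a' ≤ a ∧ a' + h' = a + h ∧ PyramidAt p a' h' ∧
      ¬ (1 ≤ a' ∧ PyramidAt p (a' - 1) (h' + 1)) := by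
  induction a generalizing h with
  | zero => exact ⟨0, h, le_rfl, rfl, hp, by omega⟩
  | succ a ih =>
    by_cases hs : PyramidAt p a (h + 1)
    · obtain ⟨a', h', h1, h2, h3⟩ := ih hs
      exact ⟨a', h', by omega, by omega, h3⟩
    · exact ⟨a + 1, h, le_rfl, rfl, hp, fun h' => hs h'.2⟩

lemma PyramidAt.start_le_of_maximal {p : List Bool} {a h a' h' : ℕ} (hp' : PyramidAt p a' h')
    (hmax : ¬ (1 ≤ a ∧ PyramidAt p (a - 1) (h + 1))) (hc : a + h = a' + h') : a ≤ a' := by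
  by_contra! hlt
  refine hmax ⟨by omega, ?_⟩
  have := hp'.sub (i := a - 1 - a') (by omega)
  rwa [show a' + (a - 1 - a') = a - 1 by omega, show h' - (a - 1 - a') = h + 1 by omega] at this

open scoped Classical in
lemma pyramidWeight_eq_card (p : List Bool) :
    pyramidWeight p = ((Finset.range p.length).filter
      (fun a => ∃ h, 0 < h ∧ PyramidAt p a h)).card := by
  have hU : (Finset.range p.length).filter (fun a => ∃ h, 0 < h ∧ PyramidAt p a h) =
      ((Finset.range p.length ×ˢ Finset.range p.length).filter
        (fun q : ℕ × ℕ => MaximalPyramidSec p q.1 q.2)).biUnion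
        (fun q => Finset.Ico q.1 (q.1 + (q.2 - q.1 + 1) / 2)) := by
    ext a
    simp only [Finset.mem_filter, Finset.mem_range, Finset.mem_biUnion, Finset.mem_product,
      Finset.mem_Ico, Prod.exists, maximalPyramidSec_iff]
    constructor
    · rintro ⟨ha, h, h0, hp⟩
      obtain ⟨a', h', h1, h2, h3, h4⟩ := hp.exists_maximal
      have hlen := (List.getElem?_eq_some_iff.1 (h3 (h' - 1) (by omega)).2).1
      exact ⟨a', a' + 2 * h' - 1, ⟨⟨by omega, by omega⟩, h', by omega, by omega, h3, h4⟩,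
        by omega, by omega⟩
    · rintro ⟨a', b, ⟨⟨h1, h2⟩, h, h0, hb, hp, hmax⟩, h5, h6⟩
      refine ⟨by omega, h - (a - a'), by omega, ?_⟩
      have := hp.sub (i := a - a') (by omega)
      rwa [show a' + (a - a') = a by omega] at this
  rw [hU, Finset.card_biUnion]
  · simp [pyramidWeight]
  · rintro ⟨a, b⟩ hq ⟨a', b'⟩ hq' hne
    rw [Function.onFun, Finset.disjoint_left]
    intro c hc hc'
    simp only [Finset.coe_filter, Set.mem_ofPred_eq, maximalPyramidSec_iff,
      Finset.mem_Ico] at hq hq' hc hc'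
    obtain ⟨-, h, _, hb, hp, hmax⟩ := hq
    obtain ⟨-, h', _, hb', hp', hmax'⟩ := hq'
    have s := hp.sub (i := c - a) (by omega)
    have s' := hp'.sub (i := c - a') (by omega)
    rw [show a + (c - a) = c by omega] at s
    rw [show a' + (c - a') = c by omega] at s'
    have e := s.eq s' (by omega) (by omega)
    have l := hp'.start_le_of_maximal hmax (by omega)
    have l' := hp.start_le_of_maximal hmax' (by omega)
    exact hne (Prod.ext (by simp; omega) (by simp; omega))

/-- The pyramid `U^h D^h`. -/
def pyramid (h : ℕ) : List Bool := List.replicate h true ++ List.replicate h false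

lemma pyramid_succ (h : ℕ) : pyramid (h + 1) = true :: (pyramid h ++ [false]) := by
  simp [pyramid, List.replicate_succ, ← List.replicate_succ']

lemma pyramidAt_iff_isPrefix (p : List Bool) (a h : ℕ) :
    PyramidAt p a h ↔ pyramid h <+: p.drop a := by
  rw [List.prefix_iff_getElem?]
  constructor
  · intro hp i hi
    simp only [pyramid, List.length_append, List.length_replicate] at hi
    simp only [pyramid, List.getElem_append, List.length_replicate, List.getElem_replicate,
      List.getElem?_drop]
    split_ifs with h1
    · exact (hp i h1).1
    · rw [← (hp (i - h) (by omega)).2]; congr 1; omega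
  · intro hp k hk
    have h1 := hp k (by simp [pyramid]; omega)
    have h2 := hp (h + k) (by simp [pyramid]; omega)
    simp only [pyramid, List.getElem_append, List.length_replicate, List.getElem_replicate,
      List.getElem?_drop] at h1 h2
    rw [dif_pos hk] at h1
    rw [dif_neg (by omega), ← add_assoc] at h2
    exact ⟨h1, h2⟩

open scoped Classical in
lemma pyramidWeight_cons (x : Bool) (p : List Bool) :
    pyramidWeight (x :: p) =
      (if ∃ h, pyramid (h + 1) <+: x :: p then 1 else 0) + pyramidWeight p := by
  simp only [pyramidWeight_eq_card, Finset.card_filter, List.length_cons,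
    Finset.sum_range_succ', pyramidAt_iff_isPrefix, List.drop_succ_cons, List.drop_zero]
  rw [add_comm]
  congr 2
  exact propext ⟨fun ⟨h, h0, hp⟩ => ⟨h - 1, by rwa [Nat.sub_add_cancel h0]⟩,
    fun ⟨h, hp⟩ => ⟨h + 1, by omega, hp⟩⟩

@[simp]
lemma pyramidWeight_nil : pyramidWeight [] = 0 := by simp [pyramidWeight]

lemma count_false_lt_count_true_of_isPrefix {s : List Bool} {h : ℕ} (hs : s <+: pyramid h)
    (hne : s ≠ []) (hlen : s.length < 2 * h) : s.count false < s.count true := by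
  rw [List.prefix_iff_eq_take, pyramid, List.take_append, List.take_replicate,
    List.take_replicate, List.length_replicate] at hs
  have hpos := List.length_pos_iff.2 hne
  rw [hs]
  simp [List.count_replicate]
  omega

lemma pyramidWeight_append (s r : List Bool)
    (hs : ∀ i, (s.drop i).count true ≤ (s.drop i).count false) :
    pyramidWeight (s ++ r) = pyramidWeight s + pyramidWeight r := by
  induction s with
  | nil => simp
  | cons x s ih =>
    rw [List.cons_append, pyramidWeight_cons, pyramidWeight_cons,
      ih fun i => by simpa using hs (i + 1), add_assoc]
    congr 2
    refine propext ⟨fun ⟨h, hp⟩ => ⟨h, ?_⟩, fun ⟨h, hp⟩ => ⟨h, hp.trans (by simp)⟩⟩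
    rw [← List.cons_append] at hp
    by_contra hn
    have hlt : (x :: s).length < (pyramid (h + 1)).length := by
      by_contra! hle
      exact hn (List.prefix_of_prefix_length_le hp (by simp) hle)
    have hpre := List.prefix_of_prefix_length_le (List.prefix_append (x :: s) r) hp hlt.le
    have h1 := count_false_lt_count_true_of_isPrefix hpre (by simp)
      (by simpa [pyramid, two_mul] using hlt)
    have h2 := hs 0
    rw [List.drop_zero] at h2
    omega

end PyramidCount

namespace DyckWord

/-- The boolean encoding of a Dyck word, with `true` for up steps. -/
def toBools (p : DyckWord) : List Bool := p.toList.map (fun s => decide (s = DyckStep.U))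

lemma stepToBool_injective : Function.Injective (fun s : DyckStep => decide (s = DyckStep.U)) := by
  rintro (_ | _) (_ | _) h <;> simp_all

lemma count_true_map (l : List DyckStep) :
    (l.map (fun s => decide (s = DyckStep.U))).count true = l.count DyckStep.U :=
  List.count_map_of_injective l _ stepToBool_injective DyckStep.U

lemma count_false_map (l : List DyckStep) :
    (l.map (fun s => decide (s = DyckStep.U))).count false = l.count DyckStep.D :=
  List.count_map_of_injective l _ stepToBool_injective DyckStep.D

lemma toBools_injective : Function.Injective toBools := fun _ _ h =>
  DyckWord.ext (List.map_injective_iff.2 stepToBool_injective h)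

@[simp] lemma toBools_zero : toBools 0 = [] := rfl

@[simp] lemma toBools_add (p q : DyckWord) : (p + q).toBools = p.toBools ++ q.toBools :=
  List.map_append

@[simp] lemma toBools_nest (p : DyckWord) : p.nest.toBools = true :: (p.toBools ++ [false]) := by
  simp [toBools, nest]

lemma count_true_toBools (p : DyckWord) : p.toBools.count true = p.semilength :=
  count_true_map _

lemma count_false_toBools (p : DyckWord) : p.toBools.count false = p.semilength := by
  rw [semilength_eq_count_D]; exact count_false_map _

lemma count_false_take_le (p : DyckWord) (i : ℕ) :
    (p.toBools.take i).count false ≤ (p.toBools.take i).count true := by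
  rw [toBools, ← List.map_take, count_false_map, count_true_map]
  exact p.count_D_le_count_U i

lemma count_true_drop_le (p : DyckWord) (i : ℕ) :
    (p.toBools.drop i).count true ≤ (p.toBools.drop i).count false := by
  have h := p.count_false_take_le i
  have ht := p.count_true_toBools
  have hf := p.count_false_toBools
  rw [← List.take_append_drop i p.toBools, List.count_append] at ht hf
  omega

lemma isDyckPath_toBools (p : DyckWord) : IsDyckPath p.semilength p.toBools :=
  ⟨by simp [toBools], p.count_true_toBools, p.count_false_take_le⟩

lemma exists_toBools_eq {n : ℕ} {l : List Bool} (h : IsDyckPath n l) :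
    ∃ p : DyckWord, p.toBools = l := by
  have hl : (l.map fun b => if b then DyckStep.U else DyckStep.D).map
      (fun s => decide (s = DyckStep.U)) = l := by
    rw [List.map_map]
    conv_rhs => rw [← List.map_id l]
    congr 1
    ext b
    cases b <;> rfl
  refine ⟨⟨l.map fun b => if b then DyckStep.U else DyckStep.D, ?_, fun i => ?_⟩, ?_⟩
  · rw [← count_true_map, ← count_false_map, hl]
    have := List.count_true_add_count_false (l := l)
    have := h.1
    have := h.2.1
    omega
  · rw [← count_true_map, ← count_false_map, List.map_take, hl]
    exact h.2.2 i
  · exact hl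

/-- Two Dyck words each followed by a down step are equal if they are prefixes of a common word. -/
lemma toBools_eq_of_isPrefix {p q : DyckWord} {r : List Bool} (hp : p.toBools ++ [false] <+: r)
    (hq : q.toBools ++ [false] <+: r) : p = q := by
  wlog hle : p.toBools.length ≤ q.toBools.length generalizing p q
  · exact (this hq hp (by omega)).symm
  rcases hle.eq_or_lt with heq | hlt
  · apply toBools_injective
    exact (List.prefix_of_prefix_length_le ((List.prefix_append _ _).trans hp)
      ((List.prefix_append _ _).trans hq) hle).eq_of_length heq
  · have h := List.prefix_of_prefix_length_le hp ((List.prefix_append _ _).trans hq)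
      (by simpa using hlt)
    have := q.count_false_take_le (p.toBools ++ [false]).length
    rw [← List.prefix_iff_eq_take.1 h] at this
    simp [count_true_toBools, count_false_toBools] at this

/-- The Dyck word `U^h D^h`. -/
def ofPyramid (h : ℕ) : DyckWord := nest^[h] 0

lemma ofPyramid_succ (h : ℕ) : ofPyramid (h + 1) = (ofPyramid h).nest :=
  Function.iterate_succ_apply' _ _ _

@[simp] lemma toBools_ofPyramid (h : ℕ) : (ofPyramid h).toBools = pyramid h := by
  induction h with
  | zero => rfl
  | succ h ih => rw [ofPyramid_succ, toBools_nest, ih, pyramid_succ]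

@[simp] lemma semilength_ofPyramid (h : ℕ) : (ofPyramid h).semilength = h := by
  induction h with
  | zero => rfl
  | succ h ih => rw [ofPyramid_succ, semilength_nest, ih]

open scoped Classical in
lemma pyramidWeight_nest_add (p q : DyckWord) :
    pyramidWeight (p.nest + q).toBools =
      (if p ∈ Set.range ofPyramid then 1 else 0) +
        (pyramidWeight p.toBools + pyramidWeight q.toBools) := by
  have hD : ¬ ∃ h, pyramid (h + 1) <+: false :: q.toBools := by
    rintro ⟨h, hp⟩
    rw [pyramid_succ, List.cons_prefix_cons] at hp
    simp at hp
  rw [toBools_add, toBools_nest, List.cons_append, pyramidWeight_cons, List.append_assoc,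
    pyramidWeight_append _ _ p.count_true_drop_le, List.singleton_append, pyramidWeight_cons,
    if_neg hD, zero_add]
  congr 2
  refine propext ⟨fun ⟨h, hp⟩ => ⟨h, ?_⟩, ?_⟩
  · rw [pyramid_succ, List.cons_prefix_cons, ← toBools_ofPyramid] at hp
    exact toBools_eq_of_isPrefix hp.2 (by simp)
  · rintro ⟨h, rfl⟩
    exact ⟨h, by simp [pyramid_succ]⟩

lemma pyramidWeight_ofPyramid (h : ℕ) : pyramidWeight (ofPyramid h).toBools = h := by
  classical
  induction h with
  | zero => simp [ofPyramid]
  | succ h ih =>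
    rw [ofPyramid_succ, ← add_zero (ofPyramid h).nest, pyramidWeight_nest_add, ih,
      if_pos ⟨h, rfl⟩]
    simp [add_comm]

/-- First-return decomposition of Dyck words. -/
noncomputable def firstReturnEquiv : Unit ⊕ DyckWord × DyckWord ≃ DyckWord :=
  Equiv.ofBijective (Sum.elim (fun _ => 0) fun x => x.1.nest + x.2) <| by
    constructor
    · rintro (_ | ⟨a, b⟩) (_ | ⟨c, d⟩) h
      · rfl
      · simp [eq_comm] at h
      · simp at h
      · have h1 := congrArg insidePart h
        have h2 := congrArg outsidePart h
        simp at h1 h2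
        rw [h1, h2]
    · intro p
      by_cases hp : p = 0
      · exact ⟨Sum.inl (), hp.symm⟩
      · exact ⟨Sum.inr (p.insidePart, p.outsidePart), nest_insidePart_add_outsidePart hp⟩

open Finsupp in
/-- The exponent `(n, k)` of a Dyck word of semilength `n` and pyramid weight `k`. -/
noncomputable def weight (p : DyckWord) : Fin 2 →₀ ℕ :=
  single 0 p.semilength + single 1 (pyramidWeight p.toBools)

lemma weight_eq_iff (p : DyckWord) (d : Fin 2 →₀ ℕ) :
    p.weight = d ↔ p.semilength = d 0 ∧ pyramidWeight p.toBools = d 1 := by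
  simp [DFunLike.ext_iff, Fin.forall_fin_two, weight]

open Finsupp in
open scoped Classical in
/-- The contribution of `p` to the exponent of `U p D`, apart from the new step pair. -/
noncomputable def nestWeight (p : DyckWord) : Fin 2 →₀ ℕ :=
  (if p ∈ Set.range ofPyramid then single 1 1 else 0) + p.weight

lemma weight_nest_add (p q : DyckWord) :
    (p.nest + q).weight = Finsupp.single 0 1 + (p.nestWeight + q.weight) := by
  rw [weight, pyramidWeight_nest_add, nestWeight, weight, weight]
  split_ifs <;> simp only [semilength_add, semilength_nest, Finsupp.single_add] <;> abel_nf
  simp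

lemma weight_ofPyramid (h : ℕ) :
    (ofPyramid h).weight = Finsupp.single 0 h + Finsupp.single 1 h := by
  rw [weight, semilength_ofPyramid, pyramidWeight_ofPyramid]

lemma finite_weight (d : Fin 2 →₀ ℕ) : Finite {p : DyckWord // p.weight = d} :=
  Finite.of_injective (β := {p : DyckWord // p.semilength = d 0})
    (fun p => ⟨p.1, ((weight_eq_iff _ _).1 p.2).1⟩)
    fun _ _ h => by simpa [Subtype.ext_iff] using h

lemma semilength_eq_of_nestWeight_eq {p : DyckWord} {d : Fin 2 →₀ ℕ} (h : p.nestWeight = d) :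
    p.semilength = d 0 := by
  rw [← h, nestWeight, weight]
  split_ifs <;> simp

lemma finite_nestWeight (d : Fin 2 →₀ ℕ) : Finite {p : DyckWord // p.nestWeight = d} :=
  Finite.of_injective (β := {p : DyckWord // p.semilength = d 0})
    (fun p => ⟨p.1, semilength_eq_of_nestWeight_eq p.2⟩)
    fun _ _ h => by simpa [Subtype.ext_iff] using h

end DyckWord

section GeneratingFunctions

open MvPowerSeries DyckWord

lemma P_eq_weightSeries : P = weightSeries DyckWord.weight := by
  ext d
  rw [coeff_weightSeries]
  refine congrArg (Nat.cast : ℕ → ℚ) (Nat.card_congr (Equiv.ofBijective (fun p =>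
    (⟨p.1.toBools, ?_⟩ : {l : List Bool // IsDyckPath (d 0) l ∧ pyramidWeight l = d 1}))
    ⟨?_, ?_⟩)).symm
  · have h := (weight_eq_iff _ _).1 p.2
    exact ⟨h.1 ▸ isDyckPath_toBools _, h.2⟩
  · intro p q h
    exact Subtype.ext (toBools_injective (congrArg Subtype.val h))
  · rintro ⟨l, hl, hw⟩
    obtain ⟨p, rfl⟩ := exists_toBools_eq hl
    refine ⟨⟨p, (weight_eq_iff _ _).2 ⟨?_, hw⟩⟩, rfl⟩
    rw [← hl.2.1, count_true_toBools]

lemma weightSeries_weight :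
    weightSeries DyckWord.weight =
      1 + X 0 * (weightSeries nestWeight * weightSeries DyckWord.weight) := by
  have hfin := finite_fiber_prod finite_nestWeight finite_weight
  have h1 : (1 : MvPowerSeries (Fin 2) ℚ) = weightSeries (fun _ : Unit => 0) := by
    rw [weightSeries_unit, monomial_zero_one]
  rw [← weightSeries_prod _ _ finite_nestWeight finite_weight, X, ← weightSeries_add_left _ _ hfin,
    h1, ← weightSeries_sum _ _ (fun _ => inferInstance) (finite_fiber_add_left hfin _)]
  refine (weightSeries_congr firstReturnEquiv ?_).symm
  rintro (_ | ⟨p, q⟩)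
  · exact (weight_eq_iff 0 0).2 ⟨rfl, by simp⟩
  · exact weight_nest_add p q

/-- The generating function of pyramids. -/
noncomputable def pyramidSeries : MvPowerSeries (Fin 2) ℚ :=
  weightSeries (fun h => (ofPyramid h).weight)

lemma ofPyramid_injective : Function.Injective ofPyramid :=
  Function.LeftInverse.injective semilength_ofPyramid

lemma pyramidSeries_eq : pyramidSeries = 1 + X 0 * X 1 * pyramidSeries := by
  have hfin := finite_fiber_comp ofPyramid_injective finite_weight
  have h1 : (1 : MvPowerSeries (Fin 2) ℚ) = weightSeries (fun _ : Unit => 0) := by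
    rw [weightSeries_unit, monomial_zero_one]
  rw [pyramidSeries, X, X, monomial_mul_monomial, mul_one, ← weightSeries_add_left _ _ hfin, h1,
    add_comm, ← weightSeries_sum _ _ (finite_fiber_add_left hfin _) (fun _ => inferInstance)]
  refine (weightSeries_congr Equiv.natSumPUnitEquivNat ?_).symm
  rintro (h | _)
  · change (ofPyramid (h + 1)).weight = _
    simp only [weight_ofPyramid, Sum.elim_inl, Finsupp.single_add]
    abel
  · exact (weight_eq_iff 0 0).2 ⟨rfl, by simp⟩

lemma pyramidSeries_eq_inv :
    pyramidSeries = (1 - X 0 * X 1 : MvPowerSeries (Fin 2) ℚ)⁻¹ := by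
  rw [MvPowerSeries.eq_inv_iff_mul_eq_one (by simp)]
  linear_combination pyramidSeries_eq

lemma weightSeries_nestWeight :
    weightSeries nestWeight = weightSeries DyckWord.weight - (1 - X 1) * pyramidSeries := by
  have hP : weightSeries (fun p : {p // p ∈ Set.range ofPyramid} => p.1.weight) =
      pyramidSeries :=
    (weightSeries_congr (Equiv.ofInjective _ ofPyramid_injective) fun _ => rfl).symm
  have hN : weightSeries (fun p : {p // p ∈ Set.range ofPyramid} => p.1.nestWeight) =
      X 1 * pyramidSeries := by
    rw [← hP, X, ← weightSeries_add_left _ _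
      (finite_fiber_comp Subtype.val_injective finite_weight)]
    exact weightSeries_congr (Equiv.refl _) fun p => by simp only [nestWeight, if_pos p.2]; rfl
  have hC : weightSeries (fun p : {p // ¬ p ∈ Set.range ofPyramid} => p.1.nestWeight) =
      weightSeries (fun p : {p // ¬ p ∈ Set.range ofPyramid} => p.1.weight) :=
    weightSeries_congr (Equiv.refl _) fun p => by
      simp only [nestWeight, if_neg p.2, zero_add]; rfl
  rw [weightSeries_eq_subtype_add (· ∈ Set.range ofPyramid) nestWeight finite_nestWeight,
    weightSeries_eq_subtype_add (· ∈ Set.range ofPyramid) DyckWord.weight finite_weight,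
    hP, hN, hC]
  ring

end GeneratingFunctions
open MvPowerSeries in
/-- `P = 1 + x·(P - (1-y)/(1-xy))·P`. -/
theorem P_equation :
    P = 1 + (X 0 : MvPowerSeries (Fin 2) ℚ) *
      (P - (1 - X 1) * (1 - X 0 * X 1)⁻¹) * P := by
  rw [P_eq_weightSeries, ← pyramidSeries_eq_inv, ← weightSeries_nestWeight, mul_assoc]
  exact weightSeries_weight
end

section
/- For s ≥ 1, let P(x,y) = Σ p_{n,k} y^k x^n where p_{n,k} is the number of s-ary paths of length n with pyramid weight k. Then P satisfies P = 1 + x·(P^s - (1-y)/(1-x·y))·P as formal power series. -/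
/-- An `s`-ary path of length `n`, encoded as a list of booleans where `true` is an up
step `(1,1)` and `false` is a (grand) down step `(1,-s)`; the path goes from `(0,0)` to
`((s+1)n, 0)` and never passes below the x-axis. -/
def IsSAryPath (s n : ℕ) (p : List Bool) : Prop :=
  p.length = (s + 1) * n ∧ p.count false = n ∧
  ∀ i, s * (p.take i).count false ≤ (p.take i).count true

/-- The section of `p` from `a` to `b` (inclusive) is a pyramid `U^{sh} D^h` of height
`h`: `s·h` up steps followed immediately by `h` down steps. -/
def IsPyramidSecS (s : ℕ) (p : List Bool) (a b : ℕ) : Prop :=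
  a ≤ b ∧ b < p.length ∧ b - a + 1 = (s + 1) * ((b - a + 1) / (s + 1)) ∧
  (p.drop a).take (b - a + 1) =
    List.replicate (s * ((b - a + 1) / (s + 1))) true ++
      List.replicate ((b - a + 1) / (s + 1)) false

/-- The pyramid section from `a` to `b` is maximal: not contained in a higher pyramid. -/
def MaximalPyramidSecS (s : ℕ) (p : List Bool) (a b : ℕ) : Prop :=
  IsPyramidSecS s p a b ∧
    ¬ (s ≤ a ∧ b + 1 < p.length ∧ IsPyramidSecS s p (a - s) (b + 1))

open scoped Classical in
/-- The pyramid weight of an `s`-ary path `p`: the sum of the heights of its maximal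
pyramids. -/
noncomputable def pyramidWeightS (s : ℕ) (p : List Bool) : ℕ :=
  ∑ q ∈ (Finset.range p.length ×ˢ Finset.range p.length).filter
      (fun q : ℕ × ℕ => MaximalPyramidSecS s p q.1 q.2),
    (q.2 - q.1 + 1) / (s + 1)

open scoped Classical in
/-- The number of exterior down steps of `p`: down steps belonging to no pyramid. -/
noncomputable def exteriorDownSteps (s : ℕ) (p : List Bool) : ℕ :=
  ((Finset.range p.length).filter
    (fun j => p.getD j true = false ∧
      ¬ ∃ a ∈ Finset.range p.length, ∃ b ∈ Finset.range p.length,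
        a ≤ j ∧ j ≤ b ∧ IsPyramidSecS s p a b)).card

open MvPowerSeries in
/-- `Ps s = Σ p_{n,k} y^k x^n` where `p_{n,k}` is the number of `s`-ary paths of
length `n` with pyramid weight `k`; `X 0` is `x` and `X 1` is `y`. -/
noncomputable def Ps (s : ℕ) : MvPowerSeries (Fin 2) ℚ :=
  fun d => (Nat.card {p : List Bool // IsSAryPath s (d 0) p ∧ pyramidWeightS s p = d 1} : ℚ)


open scoped Classical in
/-- The number of positions of `p` at which some pyramid ends. -/
noncomputable def pyramidEndCount (s : ℕ) (p : List Bool) : ℕ :=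
  {b ∈ Finset.range p.length | ∃ a, IsPyramidSecS s p a b}.card

/-- `p` contains the pyramid of height `h` whose first down step has position `c`. -/
def HasPyramidAt (s : ℕ) (p : List Bool) (c h : ℕ) : Prop :=
  s * h ≤ c ∧ (∀ i, i < c → c ≤ i + s * h → p[i]? = some true) ∧
    ∀ i, c ≤ i → i < c + h → p[i]? = some false

theorem HasPyramidAt.mono {s : ℕ} {p : List Bool} {c h k : ℕ} (hk : k ≤ h)
    (H : HasPyramidAt s p c h) : HasPyramidAt s p c k := by
  have := Nat.mul_le_mul_left s hk
  exact ⟨by have := H.1; omega, fun i h1 h2 => H.2.1 i h1 (by omega),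
    fun i h1 h2 => H.2.2 i h1 (by omega)⟩

theorem HasPyramidAt.lt_length {s : ℕ} {p : List Bool} {c h i : ℕ}
    (H : HasPyramidAt s p c h) (hi : i < h) : c + i < p.length := by
  have := H.2.2 (c + i) (by omega) (by omega)
  by_contra hc
  rw [List.getElem?_eq_none (by omega)] at this
  simp at this

theorem HasPyramidAt.le_of_add_eq {s : ℕ} (hs : 1 ≤ s) {p : List Bool} {c h c' h' : ℕ}
    (H : HasPyramidAt s p c h) (H' : HasPyramidAt s p c' h') (hh : 1 ≤ h')
    (e : c + h = c' + h') : c' ≤ c := by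
  by_contra hc
  have := Nat.mul_le_mul hs hh
  have h1 := H'.2.1 (c' - 1) (by omega) (by omega)
  have h2 := H.2.2 (c' - 1) (by omega) (by omega)
  simp [h1] at h2

theorem take_drop_eq_pyramid_iff {s : ℕ} {p : List Bool} {a h : ℕ} :
    (p.drop a).take ((s + 1) * h) = List.replicate (s * h) true ++ List.replicate h false ↔
      HasPyramidAt s p (a + s * h) h := by
  have e : (s + 1) * h = s * h + h := by ring
  rw [e]
  generalize hm : s * h = m
  constructor
  · intro H
    refine ⟨by omega, fun i h1 h2 => ?_, fun i h1 h2 => ?_⟩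
    all_goals
      have := congrArg (fun l => l[i - a]?) H
      simp only [List.getElem?_take, List.getElem?_drop, List.getElem?_append,
        List.getElem?_replicate, List.length_replicate] at this
      rw [if_pos (by omega), show a + (i - a) = i by omega] at this
      rw [this]
    · rw [if_pos (by omega), if_pos (by omega)]
    · rw [if_neg (by omega), if_pos (by omega)]
  · rintro ⟨-, h1, h2⟩
    rw [hm] at h1
    apply List.ext_getElem?
    intro i
    simp only [List.getElem?_take, List.getElem?_drop, List.getElem?_append,
      List.getElem?_replicate, List.length_replicate]
    split_ifs with h3 h4 h5
    · exact h1 _ (by omega) (by omega)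
    · exact h2 _ (by omega) (by omega)
    · omega
    · omega
    · omega
    · rfl

theorem isPyramidSecS_iff_take {s : ℕ} {p : List Bool} {a b : ℕ} :
    IsPyramidSecS s p a b ↔ ∃ h, 1 ≤ h ∧ b + 1 = a + (s + 1) * h ∧ b < p.length ∧
      (p.drop a).take ((s + 1) * h) =
        List.replicate (s * h) true ++ List.replicate h false := by
  constructor
  · rintro ⟨h1, h2, h3, h4⟩
    generalize (b - a + 1) / (s + 1) = h at h3 h4
    refine ⟨h, ?_, by omega, h2, h3 ▸ h4⟩
    by_contra h0
    obtain rfl : h = 0 := by omega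
    omega
  · rintro ⟨h, h1, h2, h3, h4⟩
    have hpos : 1 ≤ (s + 1) * h := Nat.mul_pos (by omega) h1
    have e : b - a + 1 = (s + 1) * h := by omega
    have e' : (s + 1) * h / (s + 1) = h := Nat.mul_div_cancel_left h (by omega)
    refine ⟨by omega, h3, ?_, ?_⟩
    · rw [e, e']
    · rw [e, e']; exact h4

theorem isPyramidSecS_iff {s : ℕ} {p : List Bool} {a b : ℕ} :
    IsPyramidSecS s p a b ↔ ∃ h, 1 ≤ h ∧ b + 1 = a + (s + 1) * h ∧
      HasPyramidAt s p (a + s * h) h := by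
  rw [isPyramidSecS_iff_take]
  refine exists_congr fun h => and_congr_right fun h1 => and_congr_right fun h2 => ?_
  rw [take_drop_eq_pyramid_iff]
  refine ⟨fun H => H.2, fun H => ⟨?_, H⟩⟩
  have := H.lt_length (i := h - 1) (by omega)
  have e : (s + 1) * h = s * h + h := by ring
  omega

theorem exists_isPyramidSecS_iff {s : ℕ} {p : List Bool} {b : ℕ} :
    (∃ a, IsPyramidSecS s p a b) ↔ ∃ c h, 1 ≤ h ∧ b + 1 = c + h ∧ HasPyramidAt s p c h := by
  constructor
  · rintro ⟨a, ha⟩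
    obtain ⟨h, h1, h2, h3⟩ := isPyramidSecS_iff.1 ha
    exact ⟨_, h, h1, by rw [h2]; ring, h3⟩
  · rintro ⟨c, h, h1, h2, h3⟩
    have := h3.1
    refine ⟨c - s * h, isPyramidSecS_iff.2 ⟨h, h1, ?_, ?_⟩⟩
    · have e : (s + 1) * h = s * h + h := by ring
      omega
    · rwa [Nat.sub_add_cancel this]

theorem maximalPyramidSecS_iff {s : ℕ} {p : List Bool} {a b : ℕ} :
    MaximalPyramidSecS s p a b ↔ ∃ h, 1 ≤ h ∧ b + 1 = a + (s + 1) * h ∧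
      HasPyramidAt s p (a + s * h) h ∧ ¬ HasPyramidAt s p (a + s * h) (h + 1) := by
  constructor
  · rintro ⟨h1, h2⟩
    obtain ⟨h, h3, h4, h5⟩ := isPyramidSecS_iff.1 h1
    refine ⟨h, h3, h4, h5, fun h6 => h2 ?_⟩
    have e : (s + 1) * h = s * h + h := by ring
    have e' : s * (h + 1) = s * h + s := by ring
    have e'' : (s + 1) * (h + 1) = s * h + h + s + 1 := by ring
    have h7 := h6.1
    refine ⟨by omega, ?_, isPyramidSecS_iff.2 ⟨h + 1, by omega, by omega, ?_⟩⟩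
    · have := h6.lt_length (i := h) (by omega)
      omega
    · rwa [show a - s + s * (h + 1) = a + s * h by omega]
  · rintro ⟨h, h1, h2, h3, h4⟩
    refine ⟨isPyramidSecS_iff.2 ⟨h, h1, h2, h3⟩, ?_⟩
    rintro ⟨h5, h6, h7⟩
    obtain ⟨k, h8, h9, h10⟩ := isPyramidSecS_iff.1 h7
    have e : k = h + 1 := by
      have : (s + 1) * k = (s + 1) * (h + 1) := by
        have : (s + 1) * (h + 1) = (s + 1) * h + s + 1 := by ring
        omega
      exact Nat.eq_of_mul_eq_mul_left (by omega) this
    subst e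
    have e' : s * (h + 1) = s * h + s := by ring
    rw [show a - s + s * (h + 1) = a + s * h by omega] at h10
    exact h4 h10

theorem HasPyramidAt.exists_maximal {s : ℕ} {p : List Bool} {c h : ℕ} (hh : 1 ≤ h)
    (H : HasPyramidAt s p c h) :
    ∃ k, h ≤ k ∧ HasPyramidAt s p c k ∧ ¬ HasPyramidAt s p c (k + 1) := by
  by_contra! hc
  have : ∀ k, h ≤ k → HasPyramidAt s p c k := fun k hk => by
    induction k, hk using Nat.le_induction with
    | base => exact H
    | succ k hk ih => exact hc k hk ih
  have := (this (h + p.length) (by omega)).lt_length (i := p.length) (by omega)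
  omega

/-- The pyramid weight counts the positions at which pyramids end: a maximal pyramid of height
`h` accounts for exactly `h` of them. -/
theorem pyramidWeightS_eq_pyramidEndCount {s : ℕ} (hs : 1 ≤ s) (p : List Bool) :
    pyramidWeightS s p = pyramidEndCount s p := by
  classical
  have key : {b ∈ Finset.range p.length | ∃ a, IsPyramidSecS s p a b} =
      ((Finset.range p.length ×ˢ Finset.range p.length).filter
        (fun q : ℕ × ℕ => MaximalPyramidSecS s p q.1 q.2)).biUnion
        (fun q => Finset.Ioc (q.2 - (q.2 - q.1 + 1) / (s + 1)) q.2) := by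
    ext b
    simp only [Finset.mem_filter, Finset.mem_range, Finset.mem_biUnion, Finset.mem_product,
      Finset.mem_Ioc, Prod.exists]
    constructor
    · rintro ⟨hb, hp⟩
      obtain ⟨c, h, h1, h2, h3⟩ := exists_isPyramidSecS_iff.1 hp
      obtain ⟨k, h4, h5, h6⟩ := h3.exists_maximal h1
      have h7 := h5.1
      have h8 := h5.lt_length (i := k - 1) (by omega)
      have e : (s + 1) * k = s * k + k := by ring
      have hpos := Nat.mul_le_mul hs (h1.trans h4)
      refine ⟨c - s * k, c + k - 1, ⟨⟨by omega, by omega⟩, maximalPyramidSecS_iff.2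
        ⟨k, by omega, by omega, ?_⟩⟩, ?_, by omega⟩
      · rw [Nat.sub_add_cancel h7]; exact ⟨h5, h6⟩
      · rw [show c + k - 1 - (c - s * k) + 1 = (s + 1) * k by omega,
          Nat.mul_div_cancel_left k (by omega)]
        omega
    · rintro ⟨a, b', ⟨⟨ha, hb'⟩, hM⟩, h1, h2⟩
      refine ⟨by omega, ?_⟩
      obtain ⟨h, h3, h4, h5, h6⟩ := maximalPyramidSecS_iff.1 hM
      have e : (s + 1) * h = s * h + h := by ring
      rw [show b' - a + 1 = (s + 1) * h by omega, Nat.mul_div_cancel_left h (by omega)] at h1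
      exact exists_isPyramidSecS_iff.2 ⟨a + s * h, b + 1 - (a + s * h), by omega, by omega,
        h5.mono (by omega)⟩
  have height : ∀ q : ℕ × ℕ, MaximalPyramidSecS s p q.1 q.2 →
      (q.2 - q.1 + 1) / (s + 1) ≤ q.2 := by
    rintro ⟨a, b⟩ hM
    obtain ⟨h, h3, h4, h5, h6⟩ := maximalPyramidSecS_iff.1 hM
    have e : (s + 1) * h = s * h + h := by ring
    have := Nat.mul_le_mul hs h3
    simp only at h4 ⊢
    rw [show b - a + 1 = (s + 1) * h by omega, Nat.mul_div_cancel_left h (by omega)]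
    omega
  have disj : ∀ q q' : ℕ × ℕ, MaximalPyramidSecS s p q.1 q.2 →
      MaximalPyramidSecS s p q'.1 q'.2 → q.2 ≤ q'.2 →
      q'.2 - (q'.2 - q'.1 + 1) / (s + 1) < q.2 → q = q' := by
    rintro ⟨a, b⟩ ⟨a', b'⟩ hM hM' hle hlt
    obtain ⟨h, h3, h4, h5, h6⟩ := maximalPyramidSecS_iff.1 hM
    obtain ⟨h', h3', h4', h5', h6'⟩ := maximalPyramidSecS_iff.1 hM'
    simp only at *
    have e : (s + 1) * h = s * h + h := by ring
    have e' : (s + 1) * h' = s * h' + h' := by ring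
    rw [show b' - a' + 1 = (s + 1) * h' by omega, Nat.mul_div_cancel_left h' (by omega)] at hlt
    have H' := h5'.mono (k := b + 1 - (a' + s * h')) (by omega)
    have l1 := H'.le_of_add_eq hs h5 h3 (by omega)
    have l2 := h5.le_of_add_eq hs H' (by omega) (by omega)
    have hc : a + s * h = a' + s * h' := by omega
    have hh : h = h' := by
      by_contra hne
      rw [hc] at h6
      exact h6 (h5'.mono (by omega))
    subst hh
    ext <;> simp only <;> omega
  rw [pyramidEndCount, key, Finset.card_biUnion]
  · rw [pyramidWeightS]
    refine Finset.sum_congr rfl fun q hq => ?_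
    have := height q (Finset.mem_filter.1 hq).2
    rw [Nat.card_Ioc, Nat.sub_sub_self this]
  · intro q hq q' hq' hne
    refine Finset.disjoint_left.2 ?_
    intro x hx hx'
    rw [Finset.mem_Ioc] at hx hx'
    have hM := (Finset.mem_filter.1 hq).2
    have hM' := (Finset.mem_filter.1 hq').2
    rcases le_total q.2 q'.2 with hle | hle
    · exact hne (disj q q' hM hM' hle (by omega))
    · exact hne (disj q' q hM' hM hle (by omega)).symm

/-- `p` ends with a pyramid. -/
def EndsWithPyramid (s : ℕ) (p : List Bool) : Prop :=
  ∃ l h, p = l ++ (List.replicate (s * (h + 1)) true ++ List.replicate (h + 1) false)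

theorem exists_isPyramidSecS_iff_endsWithPyramid {s : ℕ} {p : List Bool} {b : ℕ}
    (hb : b < p.length) : (∃ a, IsPyramidSecS s p a b) ↔ EndsWithPyramid s (p.take (b + 1)) := by
  constructor
  · rintro ⟨a, ha⟩
    obtain ⟨h, h1, h2, h3, h4⟩ := isPyramidSecS_iff_take.1 ha
    obtain ⟨h, rfl⟩ := Nat.exists_eq_add_of_le' h1
    exact ⟨p.take a, h, by rw [h2, List.take_add, h4]⟩
  · rintro ⟨l, h, hl⟩
    have e : (s + 1) * (h + 1) = s * (h + 1) + (h + 1) := by ring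
    have len := congrArg List.length hl
    simp only [List.length_take, List.length_append, List.length_replicate] at len
    refine ⟨l.length, isPyramidSecS_iff_take.2 ⟨h + 1, by omega, by omega, hb, ?_⟩⟩
    have := congrArg (List.drop l.length) hl
    rw [List.drop_left, List.drop_take] at this
    rw [← this]
    congr 1
    omega

theorem pyramidEndCount_nil (s : ℕ) : pyramidEndCount s [] = 0 := by
  simp [pyramidEndCount]

open scoped Classical in
theorem pyramidEndCount_concat (s : ℕ) (p : List Bool) (x : Bool) :
    pyramidEndCount s (p ++ [x]) =
      pyramidEndCount s p + if EndsWithPyramid s (p ++ [x]) then 1 else 0 := by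
  unfold pyramidEndCount
  rw [List.length_append, List.length_singleton, Finset.range_add_one, Finset.filter_insert]
  have h1 : {b ∈ Finset.range p.length | ∃ a, IsPyramidSecS s (p ++ [x]) a b} =
      {b ∈ Finset.range p.length | ∃ a, IsPyramidSecS s p a b} := by
    refine Finset.filter_congr fun b hb => ?_
    rw [Finset.mem_range] at hb
    rw [exists_isPyramidSecS_iff_endsWithPyramid hb,
      exists_isPyramidSecS_iff_endsWithPyramid (by simp; omega),
      List.take_append_of_le_length (by omega)]
  have h2 : (∃ a, IsPyramidSecS s (p ++ [x]) a p.length) ↔ EndsWithPyramid s (p ++ [x]) := by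
    rw [exists_isPyramidSecS_iff_endsWithPyramid (by simp), List.take_of_length_le (by simp)]
  rw [h1, h2]
  split_ifs
  · rw [Finset.card_insert_of_notMem (by simp)]
  · rfl

theorem not_endsWithPyramid_concat_true (s : ℕ) (p : List Bool) :
    ¬ EndsWithPyramid s (p ++ [true]) := by
  rintro ⟨l, h, hl⟩
  rw [List.replicate_succ', ← List.append_assoc, ← List.append_assoc] at hl
  simpa using (List.append_inj' hl rfl).2

/-- `p` never passes below the x-axis. -/
def StaysNonneg (s : ℕ) (p : List Bool) : Prop :=
  ∀ l, l <+: p → s * l.count false ≤ l.count true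

theorem StaysNonneg.of_append {s : ℕ} {p q : List Bool} (H : StaysNonneg s (p ++ q)) :
    StaysNonneg s p :=
  fun l hl => H l (hl.trans (List.prefix_append p q))

theorem StaysNonneg.concat {s : ℕ} {p : List Bool} {x : Bool} (H : StaysNonneg s p)
    (hx : s * (p ++ [x]).count false ≤ (p ++ [x]).count true) : StaysNonneg s (p ++ [x]) := by
  intro l hl
  rcases List.prefix_concat_iff.1 hl with rfl | hl
  · simpa using hx
  · exact H l hl

theorem StaysNonneg.append {s : ℕ} {p q : List Bool} (hp : StaysNonneg s p)
    (hq : StaysNonneg s q) : StaysNonneg s (p ++ q) := by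
  induction q using List.reverseRecOn with
  | nil => simpa using hp
  | append_singleton q x ih =>
    rw [← List.append_assoc]
    refine (ih hq.of_append).concat ?_
    have h1 := hp p List.prefix_rfl
    have h2 := hq (q ++ [x]) List.prefix_rfl
    rw [List.append_assoc, List.count_append, List.count_append (a := true), mul_add]
    omega

theorem staysNonneg_nil (s : ℕ) : StaysNonneg s [] := by
  intro l hl
  simp [List.prefix_nil.1 hl]

theorem staysNonneg_replicate_true (s n : ℕ) : StaysNonneg s (List.replicate n true) := by
  intro l hl
  obtain ⟨-, hl⟩ := List.prefix_replicate_iff.1 hl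
  rw [hl]
  simp [List.count_replicate]

theorem endsWithPyramid_append_true_cons {s : ℕ} (hs : 1 ≤ s) {q t : List Bool}
    (ht : s * t.count false ≤ t.count true) :
    EndsWithPyramid s (q ++ true :: t) ↔ EndsWithPyramid s t := by
  constructor
  · rintro ⟨l, h, hl⟩
    rw [List.append_cons] at hl
    rcases List.append_eq_append_iff.1 hl with ⟨c, rfl, hc⟩ | ⟨c, hc, hct⟩
    · exact ⟨c, h, hc⟩
    rcases List.append_eq_append_iff.1 hct with ⟨d, rfl, hd⟩ | ⟨d, hd, rfl⟩
    · have hn := congrArg (List.count false) hd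
      have ht' := congrArg (List.count true) hd
      simp only [List.count_append, List.count_replicate_self] at hn ht'
      simp only [List.count_replicate] at ht'
      have : t.count false = 0 := by
        have := Nat.mul_le_mul_right (t.count false) hs
        simp at ht'
        omega
      have ht0 : t = [] := by
        rw [← List.length_eq_zero_iff, ← List.count_false_add_count_true t]
        simp at ht'
        omega
      rw [ht0, List.append_nil] at hd
      exact (not_endsWithPyramid_concat_true s q ⟨l, h, by rw [hc, hd]⟩).elim
    · have hm := congrArg List.length hd
      have := d.count_le_length (a := true)
      simp only [List.count_append, List.count_replicate, List.length_append,
        List.length_replicate] at hm ht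
      simp at ht
      have hc0 : c = [] := by
        rw [← List.length_eq_zero_iff]
        rw [mul_add] at ht
        omega
      exact ⟨[], h, by simp [hd, hc0]⟩
  · rintro ⟨l, h, rfl⟩
    exact ⟨q ++ true :: l, h, by simp⟩

theorem pyramidEndCount_append_true_cons {s : ℕ} (hs : 1 ≤ s) {q t : List Bool}
    (ht : StaysNonneg s t) :
    pyramidEndCount s (q ++ true :: t) = pyramidEndCount s q + pyramidEndCount s t := by
  induction t using List.reverseRecOn with
  | nil =>
    rw [pyramidEndCount_concat, if_neg (not_endsWithPyramid_concat_true s q),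
      pyramidEndCount_nil]
  | append_singleton t x ih =>
    rw [show q ++ true :: (t ++ [x]) = (q ++ true :: t) ++ [x] by simp, pyramidEndCount_concat,
      pyramidEndCount_concat, ih ht.of_append, add_assoc]
    congr 3
    rw [← endsWithPyramid_append_true_cons (q := q) hs (ht _ List.prefix_rfl)]
    simp

/-- The generating function of a class of objects with respect to a size `f`. -/
noncomputable def genFun {α : Type*} (f : α → Fin 2 →₀ ℕ) : MvPowerSeries (Fin 2) ℚ :=
  fun d => (Nat.card {a // f a = d} : ℚ)

theorem coeff_genFun {α : Type*} (f : α → Fin 2 →₀ ℕ) (d : Fin 2 →₀ ℕ) :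
    MvPowerSeries.coeff d (genFun f) = (Nat.card {a // f a = d} : ℚ) := rfl

theorem genFun_congr {α β : Type*} {f : α → Fin 2 →₀ ℕ} {g : β → Fin 2 →₀ ℕ} (e : α → β)
    (he : e.Bijective) (h : ∀ a, g (e a) = f a) : genFun f = genFun g := by
  ext d
  rw [coeff_genFun, coeff_genFun, Nat.card_congr]
  exact (Equiv.ofBijective e he).subtypeEquiv fun a => by simp [h]

theorem genFun_eq_add {α : Type*} (f : α → Fin 2 →₀ ℕ) (hf : ∀ d, Finite {a // f a = d})
    (P : α → Prop) :
    genFun f = genFun (fun a : {a // P a} => f a) + genFun (fun a : {a // ¬ P a} => f a) := by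
  classical
  ext d
  have := hf d
  rw [map_add, coeff_genFun, coeff_genFun, coeff_genFun,
    Nat.card_congr (Equiv.sumCompl fun a : {a // f a = d} => P a).symm, Nat.card_sum, Nat.cast_add,
    Nat.card_congr (Equiv.subtypeSubtypeEquivSubtypeInter (fun a => f a = d) P),
    Nat.card_congr (Equiv.subtypeSubtypeEquivSubtypeInter (fun a => f a = d) fun a => ¬ P a),
    Nat.card_congr (Equiv.subtypeSubtypeEquivSubtypeInter P fun a => f a = d),
    Nat.card_congr (Equiv.subtypeSubtypeEquivSubtypeInter (fun a => ¬ P a) fun a => f a = d)]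
  simp only [and_comm]

theorem genFun_prod {α β : Type*} (f : α → Fin 2 →₀ ℕ) (g : β → Fin 2 →₀ ℕ)
    (hf : ∀ d, Finite {a // f a = d}) (hg : ∀ d, Finite {b // g b = d}) :
    genFun (fun x : α × β => f x.1 + g x.2) = genFun f * genFun g := by
  classical
  ext d
  rw [MvPowerSeries.coeff_mul, coeff_genFun]
  let e : {x : α × β // f x.1 + g x.2 = d} ≃
      Σ x : Finset.HasAntidiagonal.antidiagonal d, {a // f a = x.1.1} × {b // g b = x.1.2} :=
    { toFun := fun x => ⟨⟨(f x.1.1, g x.1.2), Finset.HasAntidiagonal.mem_antidiagonal.2 x.2⟩,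
        ⟨x.1.1, rfl⟩, ⟨x.1.2, rfl⟩⟩
      invFun := fun y => ⟨(y.2.1.1, y.2.2.1), by
        rw [y.2.1.2, y.2.2.2]; exact Finset.HasAntidiagonal.mem_antidiagonal.1 y.1.2⟩
      left_inv := fun x => rfl
      right_inv := by
        rintro ⟨⟨⟨d1, d2⟩, hd⟩, ⟨a, ha⟩, ⟨b, hb⟩⟩
        change f a = d1 at ha
        change g b = d2 at hb
        subst ha hb
        rfl }
  rw [Nat.card_congr e, Nat.card_sigma, Nat.cast_sum,
    ← Finset.sum_coe_sort (Finset.HasAntidiagonal.antidiagonal d)]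
  exact Finset.sum_congr rfl fun x _ => by
    rw [Nat.card_prod, Nat.cast_mul, coeff_genFun, coeff_genFun]

theorem genFun_of_unique {α : Type*} [Unique α] (f : α → Fin 2 →₀ ℕ) :
    genFun f = MvPowerSeries.monomial (f default) 1 := by
  classical
  ext d
  rw [coeff_genFun, MvPowerSeries.coeff_monomial]
  split_ifs with h
  · have : Unique {a // f a = d} :=
      ⟨⟨⟨default, h.symm⟩⟩, fun a => Subtype.ext (Subsingleton.elim _ _)⟩
    simp
  · have : IsEmpty {a // f a = d} :=
      ⟨fun a => h (by rw [← a.2, Subsingleton.elim a.1 default])⟩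
    simp

theorem genFun_const_add {α : Type*} (f : α → Fin 2 →₀ ℕ) (c : Fin 2 →₀ ℕ) :
    genFun (fun a => c + f a) = MvPowerSeries.monomial c 1 * genFun f := by
  classical
  ext d
  rw [MvPowerSeries.coeff_monomial_mul, coeff_genFun, coeff_genFun, one_mul]
  split_ifs with h
  · obtain ⟨d, rfl⟩ := exists_add_of_le h
    simp
  · have : IsEmpty {a // c + f a = d} := ⟨fun a => h (le_iff_exists_add.2 ⟨_, a.2.symm⟩)⟩
    simp

/-- The exponent of `x ^ n * y ^ k`. -/
noncomputable def expXY (n k : ℕ) : Fin 2 →₀ ℕ := Finsupp.single 0 n + Finsupp.single 1 k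

theorem expXY_eq_iff {n k : ℕ} {d : Fin 2 →₀ ℕ} : expXY n k = d ↔ n = d 0 ∧ k = d 1 := by
  constructor
  · rintro rfl
    simp [expXY]
  · rintro ⟨rfl, rfl⟩
    ext i
    fin_cases i <;> simp [expXY]

theorem expXY_add (n k m l : ℕ) : expXY n k + expXY m l = expXY (n + m) (k + l) := by
  simp only [expXY, Finsupp.single_add]
  abel

open MvPowerSeries in
theorem monomial_expXY (n k : ℕ) :
    monomial (expXY n k) (1 : ℚ) = (X 0 : MvPowerSeries (Fin 2) ℚ) ^ n * X 1 ^ k := by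
  rw [X_pow_eq, X_pow_eq, monomial_mul_monomial, mul_one, expXY]

theorem finite_expXY_diagonal (d : Fin 2 →₀ ℕ) : Finite {h : ℕ // expXY h h = d} := by
  have : Subsingleton {h : ℕ // expXY h h = d} :=
    ⟨fun a b => Subtype.ext ((expXY_eq_iff.1 a.2).1.trans (expXY_eq_iff.1 b.2).1.symm)⟩
  infer_instance

open MvPowerSeries in
theorem genFun_expXY_diagonal :
    genFun (fun h : ℕ => expXY h h) = (1 - X 0 * X 1 : MvPowerSeries (Fin 2) ℚ)⁻¹ := by
  rw [MvPowerSeries.eq_inv_iff_mul_eq_one (by simp)]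
  have h := genFun_eq_add (fun h : ℕ => expXY h h) finite_expXY_diagonal (fun h => h = 0)
  have h0 : genFun (fun h : {h : ℕ // h = 0} => expXY h h) = 1 := by
    have hz : ∀ h : {h : ℕ // h = 0}, (h : ℕ) = 0 := fun h => h.2
    rw [genFun_of_unique, monomial_expXY, hz, pow_zero, pow_zero, one_mul]
  have h1 : genFun (fun h : {h : ℕ // ¬ h = 0} => expXY h h) =
      X 0 * X 1 * genFun (fun h : ℕ => expXY h h) := by
    rw [show (X 0 * X 1 : MvPowerSeries (Fin 2) ℚ) = monomial (expXY 1 1) 1 by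
      rw [monomial_expXY, pow_one, pow_one], ← genFun_const_add]
    refine (genFun_congr (fun h => ⟨h + 1, by omega⟩)
      ⟨fun a b h => Nat.succ_injective (Subtype.ext_iff.1 h), ?_⟩ ?_).symm
    · rintro ⟨h, hh⟩
      exact ⟨h - 1, Subtype.ext (by simp only; omega)⟩
    · intro h
      rw [expXY_add]
      simp only [add_comm]
  rw [h0, h1] at h
  linear_combination h

/-- Paths that never pass below the x-axis and end at height `k`. -/
def PathTo (s k : ℕ) : Type :=
  {p : List Bool // StaysNonneg s p ∧ p.count true = s * p.count false + k}

/-- The exponent recording the number of down steps and the number of pyramid ends. -/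
noncomputable def pathExp (s : ℕ) (p : List Bool) : Fin 2 →₀ ℕ :=
  expXY (p.count false) (pyramidEndCount s p)

theorem PathTo.finite_fiber {s k : ℕ} {f : PathTo s k → Fin 2 →₀ ℕ}
    (hf : ∀ p, p.1.count false ≤ f p 0) (d : Fin 2 →₀ ℕ) : Finite {p // f p = d} := by
  have : Finite {l : List Bool | l.length ≤ s * d 0 + k + d 0} :=
    (List.finite_length_le Bool _).to_subtype
  refine Finite.of_injective
    (fun p => (⟨p.1.1, ?_⟩ : {l : List Bool | l.length ≤ s * d 0 + k + d 0})) ?_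
  · have h := hf p.1
    rw [p.2] at h
    have := Nat.mul_le_mul_left s h
    rw [Set.mem_ofPred_eq, ← List.count_true_add_count_false, p.1.2.2]
    omega
  · intro p q h
    have hpq : p.1.1 = q.1.1 := by simpa using h
    exact Subtype.ext (Subtype.ext hpq)

theorem pathExp_apply_zero (s : ℕ) (p : List Bool) : pathExp s p 0 = p.count false := by
  simp [pathExp, expXY]

theorem Ps_eq_genFun {s : ℕ} (hs : 1 ≤ s) :
    Ps s = genFun (fun p : PathTo s 0 => pathExp s p.1) := by
  ext d
  rw [coeff_genFun]
  change (Nat.card _ : ℚ) = _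
  congr 1
  refine Nat.card_congr ⟨fun p => ⟨⟨p.1, ?_⟩, ?_⟩, fun p => ⟨p.1.1, ?_⟩, fun p => rfl, fun p => rfl⟩
  · obtain ⟨p, ⟨h1, h2, h3⟩, h4⟩ := p
    constructor
    · intro l hl
      rw [List.prefix_iff_eq_take.1 hl]
      exact h3 _
    · rw [← List.count_true_add_count_false] at h1
      simp only
      rw [h2] at h1 ⊢
      linarith
  · obtain ⟨p, ⟨h1, h2, h3⟩, h4⟩ := p
    exact expXY_eq_iff.2 ⟨h2, (pyramidWeightS_eq_pyramidEndCount hs p).symm.trans h4⟩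
  · obtain ⟨⟨p, h1, h2⟩, h3⟩ := p
    obtain ⟨h4, h5⟩ := expXY_eq_iff.1 h3
    simp only at h4 h5 ⊢
    refine ⟨⟨?_, h4, fun i => h1 _ (List.take_prefix i p)⟩,
      by rw [pyramidWeightS_eq_pyramidEndCount hs, h5]⟩
    rw [← List.count_true_add_count_false, h2, h4]
    ring

theorem StaysNonneg.append_true_cons {s : ℕ} {q t : List Bool} (hq : StaysNonneg s q)
    (ht : StaysNonneg s t) : StaysNonneg s (q ++ true :: t) := by
  have : true :: t = List.replicate 1 true ++ t := rfl
  rw [this]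
  exact hq.append ((staysNonneg_replicate_true s 1).append ht)

/-- Last passage decomposition: a path that ends above height `k` passes this height for the last
time in an up step. -/
theorem StaysNonneg.exists_last_passage {s k : ℕ} {p : List Bool} (hp : StaysNonneg s p)
    (h : s * p.count false + k + 1 ≤ p.count true) :
    ∃ q t, p = q ++ true :: t ∧ StaysNonneg s q ∧ q.count true = s * q.count false + k ∧
      StaysNonneg s t := by
  induction p using List.reverseRecOn with
  | nil => simp at h
  | append_singleton p x ih =>
    have hp' := hp.of_append
    cases x with
    | true =>
      simp only [List.count_append, List.count_singleton] at h
      simp at h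
      rcases h.eq_or_lt with h | h
      · exact ⟨p, [], rfl, hp', h.symm, staysNonneg_nil s⟩
      · obtain ⟨q, t, rfl, hq, hqk, ht⟩ := ih hp' h
        exact ⟨q, t ++ [true], by simp, hq, hqk, ht.append (staysNonneg_replicate_true s 1)⟩
    | false =>
      have h' := h
      simp only [List.count_append, List.count_singleton, mul_add] at h
      simp at h
      obtain ⟨q, t, rfl, hq, hqk, ht⟩ := ih hp' (by omega)
      refine ⟨q, t ++ [false], by simp, hq, hqk, ht.concat ?_⟩
      simp [mul_add] at h' ⊢
      omega

theorem StaysNonneg.eq_of_last_passage {s k : ℕ} {q t q' t' : List Bool}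
    (hq : q.count true = s * q.count false + k) (hq' : q'.count true = s * q'.count false + k)
    (ht : StaysNonneg s t) (ht' : StaysNonneg s t') (h : q ++ true :: t = q' ++ true :: t') :
    q = q' ∧ t = t' := by
  have key : ∀ {q t q' c : List Bool}, q.count true = s * q.count false + k →
      q'.count true = s * q'.count false + k → StaysNonneg s t → q' = q ++ c →
      ∀ t', true :: t = c ++ true :: t' → c = [] := by
    rintro q t q' c hq hq' ht rfl t' h
    cases c with
    | nil => rfl
    | cons x c =>
      rw [List.cons_append, List.cons.injEq] at h
      obtain ⟨rfl, rfl⟩ := h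
      have := ht c (List.prefix_append _ _)
      simp [mul_add] at hq'
      omega
  have hc : q = q' := by
    rcases List.append_eq_append_iff.1 h with ⟨c, h1, h2⟩ | ⟨c, h1, h2⟩
    · rw [h1, key hq hq' ht h1 _ h2, List.append_nil]
    · rw [h1, key hq' hq ht' h1 _ h2, List.append_nil]
  subst hc
  simpa using h

theorem genFun_pathTo {s : ℕ} (hs : 1 ≤ s) (k : ℕ) :
    genFun (fun p : PathTo s k => pathExp s p.1) = Ps s ^ (k + 1) := by
  induction k with
  | zero => rw [Ps_eq_genFun hs, zero_add, pow_one]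
  | succ k ih =>
    rw [pow_succ, ← ih, Ps_eq_genFun hs, ← genFun_prod _ _
      (PathTo.finite_fiber fun p => (pathExp_apply_zero s _).ge)
      (PathTo.finite_fiber fun p => (pathExp_apply_zero s _).ge)]
    symm
    refine genFun_congr (fun x => ⟨x.1.1 ++ true :: x.2.1,
      x.1.2.1.append_true_cons x.2.2.1, ?_⟩) ⟨?_, ?_⟩ ?_
    · have h1 := x.1.2.2
      have h2 := x.2.2.2
      simp only [List.count_append, List.count_cons, mul_add]
      simp
      omega
    · rintro ⟨⟨q, hq, hq'⟩, ⟨t, ht, ht'⟩⟩ ⟨⟨r, hr, hr'⟩, ⟨u, hu, hu'⟩⟩ h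
      obtain ⟨rfl, rfl⟩ := StaysNonneg.eq_of_last_passage hq' hr' ht hu (Subtype.ext_iff.1 h)
      rfl
    · rintro ⟨p, hp, hp'⟩
      obtain ⟨q, t, rfl, hq, hqk, ht⟩ := hp.exists_last_passage (k := k) (by omega)
      simp [mul_add] at hp'
      exact ⟨(⟨q, hq, hqk⟩, ⟨t, ht, by omega⟩), rfl⟩
    · rintro ⟨⟨q, hq, hq'⟩, ⟨t, ht, ht'⟩⟩
      simp only [pathExp]
      rw [expXY_add, pyramidEndCount_append_true_cons hs ht]
      simp

theorem staysNonneg_replicate_append {s n h : ℕ} (hn : s * h ≤ n) :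
    StaysNonneg s (List.replicate n true ++ List.replicate h false) := by
  induction h with
  | zero => simpa using staysNonneg_replicate_true s n
  | succ h ih =>
    rw [List.replicate_succ', ← List.append_assoc]
    refine (ih (le_trans (Nat.mul_le_mul_left s (by omega)) hn)).concat ?_
    simpa [List.count_replicate] using hn

theorem pyramidEndCount_append_replicate {s n h : ℕ} (hn : s * h ≤ n) (r : List Bool) :
    pyramidEndCount s (r ++ (List.replicate n true ++ List.replicate h false)) =
      pyramidEndCount s r + h := by
  induction h with
  | zero =>
    clear hn
    induction n with
    | zero => simp
    | succ n ih =>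
      rw [List.replicate_zero, List.append_nil] at ih ⊢
      rw [List.replicate_succ', ← List.append_assoc, pyramidEndCount_concat, ih,
        if_neg (not_endsWithPyramid_concat_true s _)]
  | succ h ih =>
    obtain ⟨m, rfl⟩ := Nat.exists_eq_add_of_le' hn
    have hE : EndsWithPyramid s (r ++ (List.replicate (m + s * (h + 1)) true ++
        List.replicate (h + 1) false)) :=
      ⟨r ++ List.replicate m true, h, by
        rw [List.replicate_add]; simp only [List.append_assoc]⟩
    rw [List.replicate_succ', ← List.append_assoc, ← List.append_assoc] at hE ⊢
    rw [pyramidEndCount_concat, if_pos hE, List.append_assoc,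
      ih (le_trans (Nat.mul_le_mul_left s (by omega)) hn), add_assoc]

theorem eq_of_append_true_append_replicate_false {r r' : List Bool} {h h' : ℕ}
    (H : r ++ [true] ++ List.replicate h false = r' ++ [true] ++ List.replicate h' false) :
    h = h' := by
  induction h generalizing h' with
  | zero =>
    cases h' with
    | zero => rfl
    | succ h' =>
      rw [List.replicate_succ', ← List.append_assoc, List.replicate_zero, List.append_nil] at H
      simpa using (List.append_inj' H rfl).2
  | succ h ih =>
    cases h' with
    | zero =>
      rw [List.replicate_succ', ← List.append_assoc, List.replicate_zero, List.append_nil] at H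
      simpa using (List.append_inj' H rfl).2
    | succ h' =>
      rw [List.replicate_succ', List.replicate_succ', ← List.append_assoc,
        ← List.append_assoc] at H
      rw [ih (List.append_inj' H rfl).1]

open MvPowerSeries in
theorem genFun_pathTo_endsWithPyramid {s : ℕ} (hs : 1 ≤ s) :
    genFun (fun q : {q : PathTo s s // EndsWithPyramid s (q.1 ++ [false])} => pathExp s q.1.1) =
      Ps s * (1 - X 0 * X 1 : MvPowerSeries (Fin 2) ℚ)⁻¹ := by
  rw [← genFun_expXY_diagonal, Ps_eq_genFun hs, ← genFun_prod _ _
    (PathTo.finite_fiber fun p => (pathExp_apply_zero s _).ge) finite_expXY_diagonal]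
  have hle : ∀ h, s * h ≤ s * (h + 1) := fun h => Nat.mul_le_mul_left s (by omega)
  symm
  refine genFun_congr (fun x => ⟨⟨x.1.1 ++ (List.replicate (s * (x.2 + 1)) true ++
    List.replicate x.2 false), x.1.2.1.append (staysNonneg_replicate_append (hle x.2)), ?_⟩,
    x.1.1, x.2, ?_⟩) ⟨?_, ?_⟩ ?_
  · have := x.1.2.2
    simp [List.count_replicate, this]
    ring
  · simp [List.replicate_succ']
  · rintro ⟨⟨r, hr⟩, h⟩ ⟨⟨r', hr'⟩, h'⟩ H
    have H' : r ++ (List.replicate (s * (h + 1)) true ++ List.replicate h false) =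
      r' ++ (List.replicate (s * (h' + 1)) true ++ List.replicate h' false) :=
        Subtype.ext_iff.1 (Subtype.ext_iff.1 H)
    obtain rfl : h = h' := by
      obtain ⟨m, hm⟩ := Nat.exists_eq_add_of_le' (Nat.mul_pos hs h.succ_pos)
      obtain ⟨m', hm'⟩ := Nat.exists_eq_add_of_le' (Nat.mul_pos hs h'.succ_pos)
      rw [Nat.succ_eq_add_one] at hm hm'
      rw [hm, hm', List.replicate_succ', List.replicate_succ', ← List.append_assoc,
        ← List.append_assoc, ← List.append_assoc, ← List.append_assoc] at H'
      exact eq_of_append_true_append_replicate_false H'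
    obtain rfl := List.append_cancel_right H'
    rfl
  · rintro ⟨⟨q, hq, hq'⟩, l, h, hl⟩
    simp only at hl
    rw [List.replicate_succ', ← List.append_assoc, ← List.append_assoc] at hl
    have hl := List.append_cancel_right hl
    rw [List.append_assoc] at hl
    subst hl
    refine ⟨(⟨l, hq.of_append, ?_⟩, h), rfl⟩
    simp [List.count_replicate, mul_add] at hq'
    omega
  · rintro ⟨⟨r, hr⟩, h⟩
    simp only [pathExp]
    rw [expXY_add, pyramidEndCount_append_replicate (hle h)]
    simp [List.count_replicate]

theorem genFun_pathTo_zero_ne_nil {s : ℕ} :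
    genFun (fun p : {p : PathTo s 0 // ¬ p.1 = []} => pathExp s p.1.1) =
      genFun (fun q : PathTo s s => pathExp s (q.1 ++ [false])) := by
  symm
  refine genFun_congr (fun q => ⟨⟨q.1 ++ [false], q.2.1.concat ?_, ?_⟩, by simp⟩) ⟨?_, ?_⟩
    fun q => rfl
  · have := q.2.2
    simp [mul_add]
    omega
  · have := q.2.2
    simp [mul_add]
    omega
  · intro q q' h
    exact Subtype.ext (List.append_cancel_right (Subtype.ext_iff.1 (Subtype.ext_iff.1 h)))
  · rintro ⟨⟨p, hp, hp'⟩, hne⟩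
    rcases List.eq_nil_or_concat' p with rfl | ⟨q, x, rfl⟩
    · exact (hne rfl).elim
    · cases x with
      | true =>
        have := hp.of_append q List.prefix_rfl
        simp at hp'
        omega
      | false =>
        refine ⟨⟨q, hp.of_append, ?_⟩, rfl⟩
        simp [mul_add] at hp'
        omega

open scoped Classical in
theorem pathExp_concat_false (s : ℕ) (q : List Bool) :
    pathExp s (q ++ [false]) =
      expXY 1 (if EndsWithPyramid s (q ++ [false]) then 1 else 0) + pathExp s q := by
  rw [pathExp, pathExp, expXY_add, pyramidEndCount_concat, add_comm 1, add_comm (ite _ _ _)]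
  simp

open MvPowerSeries in
theorem genFun_pathTo_concat_false {s : ℕ} (hs : 1 ≤ s) :
    genFun (fun q : PathTo s s => pathExp s (q.1 ++ [false])) =
      X 0 * (Ps s ^ (s + 1) - (1 - X 1) * (Ps s * (1 - X 0 * X 1)⁻¹)) := by
  have split := genFun_eq_add (fun q : PathTo s s => pathExp s q.1)
    (PathTo.finite_fiber fun p => (pathExp_apply_zero s _).ge)
    (fun q => EndsWithPyramid s (q.1 ++ [false]))
  rw [genFun_pathTo hs, genFun_pathTo_endsWithPyramid hs] at split
  rw [genFun_eq_add _ (PathTo.finite_fiber fun p => by rw [pathExp_apply_zero]; simp)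
    (fun q => EndsWithPyramid s (q.1 ++ [false]))]
  have h1 : (fun q : {q : PathTo s s // EndsWithPyramid s (q.1 ++ [false])} =>
      pathExp s (q.1.1 ++ [false])) = fun q => expXY 1 1 + pathExp s q.1.1 := by
    funext q
    rw [pathExp_concat_false, if_pos q.2]
  have h2 : (fun q : {q : PathTo s s // ¬ EndsWithPyramid s (q.1 ++ [false])} =>
      pathExp s (q.1.1 ++ [false])) = fun q => expXY 1 0 + pathExp s q.1.1 := by
    funext q
    rw [pathExp_concat_false, if_neg q.2]
  rw [h1, h2, genFun_const_add, genFun_const_add, genFun_pathTo_endsWithPyramid hs,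
    monomial_expXY, monomial_expXY]
  linear_combination -X 0 * split

open MvPowerSeries in
/-- For `s ≥ 1`, `P` satisfies `P = 1 + x·(P^s - (1-y)/(1-xy))·P`. -/
theorem Ps_equation (s : ℕ) (hs : 1 ≤ s) :
    Ps s = 1 + (X 0 : MvPowerSeries (Fin 2) ℚ) *
      ((Ps s) ^ s - (1 - X 1) * (1 - X 0 * X 1)⁻¹) * Ps s := by
  have split := genFun_eq_add (fun p : PathTo s 0 => pathExp s p.1)
    (PathTo.finite_fiber fun p => (pathExp_apply_zero s _).ge) (fun p => p.1 = [])
  have hnil : genFun (fun p : {p : PathTo s 0 // p.1 = []} => pathExp s p.1.1) = 1 := by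
    let : Unique {p : PathTo s 0 // p.1 = []} :=
      ⟨⟨⟨⟨[], staysNonneg_nil s, by simp⟩, rfl⟩⟩,
        fun p => Subtype.ext (Subtype.ext p.2)⟩
    rw [genFun_of_unique, (default : {p : PathTo s 0 // p.1 = []}).2, pathExp, monomial_expXY,
      pyramidEndCount_nil]
    simp
  rw [← Ps_eq_genFun hs, hnil, genFun_pathTo_zero_ne_nil, genFun_pathTo_concat_false hs] at split
  linear_combination split
end
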